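/- arXiv:1606.04031 — 3 statements merged into one kernel-verified Lean document; each statement's English description precedes it below -/
import Mathlib

section
/- Borsuk–Ulam theorem: For every continuous map f : S^n → ℝ^n (where S^n ⊆ ℝ^{n+1} is the unit sphere), there exists a point x ∈ S^n such that f(x) = f(-x). -/
namespace BorsukUlam

/-- Mod 2 chains on ordered tuples of elements of `α`, in all dimensions at once. -/
abbrev Chain (α : Type*) := List α →₀ ZMod 2

/-- The chain consisting of a single tuple. -/
noncomputable abbrev simplex {α : Type*} (l : List α) : Chain α := Finsupp.single l 1

/-- The cone over a chain. -/
noncomputable def cone {α : Type*} (a : α) : Chain α →ₗ[ZMod 2] Chain α :=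
  Finsupp.lmapDomain (ZMod 2) (ZMod 2) (List.cons a)

/-- The chain map induced by a map of vertices. -/
noncomputable def push {α β : Type*} (f : α → β) : Chain α →ₗ[ZMod 2] Chain β :=
  Finsupp.lmapDomain (ZMod 2) (ZMod 2) (List.map f)

/-- The sum of the facets of a tuple. -/
noncomputable def facets {α : Type*} : List α → Chain α
  | [] => 0
  | a :: l => simplex l + cone a (facets l)

/-- The (augmented) boundary operator mod 2. -/
noncomputable def boundary {α : Type*} : Chain α →ₗ[ZMod 2] Chain α :=
  Finsupp.linearCombination (ZMod 2) facets

/-- The prism between the images of a tuple under two maps. -/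
noncomputable def prismOn {α β : Type*} (f g : α → β) : List α → Chain β
  | [] => 0
  | a :: l => simplex (f a :: g a :: l.map g) + cone (f a) (prismOn f g l)

/-- The prism operator of two maps. -/
noncomputable def prism {α β : Type*} (f g : α → β) : Chain α →ₗ[ZMod 2] Chain β :=
  Finsupp.linearCombination (ZMod 2) (prismOn f g)

section Chains

variable {α β : Type*}

theorem chain_ext {M : Type*} [AddCommMonoid M] [Module (ZMod 2) M]
    {S T : Chain α →ₗ[ZMod 2] M} (h : ∀ l, S (simplex l) = T (simplex l)) : S = T := by
  refine Finsupp.lhom_ext' fun l => LinearMap.ext_ring ?_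
  simpa using h l

@[simp] theorem cone_simplex (a : α) (l : List α) : cone a (simplex l) = simplex (a :: l) := by
  simp [cone]

@[simp] theorem push_simplex (f : α → β) (l : List α) :
    push f (simplex l) = simplex (l.map f) := by
  simp [push]

@[simp] theorem boundary_simplex (l : List α) : boundary (simplex l) = facets l := by
  simp [boundary]

@[simp] theorem prism_simplex (f g : α → β) (l : List α) :
    prism f g (simplex l) = prismOn f g l := by
  simp [prism]

theorem boundary_cone (a : α) (c : Chain α) :
    boundary (cone a c) = c + cone a (boundary c) := by
  have : boundary ∘ₗ cone a = LinearMap.id + cone a ∘ₗ boundary :=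
    chain_ext fun l => by simp [facets]
  exact LinearMap.congr_fun this c

theorem push_cone (f : α → β) (a : α) (c : Chain α) :
    push f (cone a c) = cone (f a) (push f c) := by
  have : push f ∘ₗ cone a = cone (f a) ∘ₗ push f := chain_ext fun l => by simp
  exact LinearMap.congr_fun this c

theorem prism_cone (f g : α → β) (a : α) (c : Chain α) :
    prism f g (cone a c) =
      cone (f a) (cone (g a) (push g c)) + cone (f a) (prism f g c) := by
  have : prism f g ∘ₗ cone a =
      cone (f a) ∘ₗ cone (g a) ∘ₗ push g + cone (f a) ∘ₗ prism f g :=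
    chain_ext fun l => by simp [prismOn]
  exact LinearMap.congr_fun this c

theorem push_facets (f : α → β) (l : List α) : push f (facets l) = facets (l.map f) := by
  induction l with
  | nil => simp [facets]
  | cons a l ih => simp [facets, push_cone, ih]

theorem boundary_push (f : α → β) (c : Chain α) :
    boundary (push f c) = push f (boundary c) := by
  have : boundary ∘ₗ push f = push f ∘ₗ boundary :=
    chain_ext fun l => by simp [push_facets]
  exact LinearMap.congr_fun this c

theorem push_push_of_involutive {f : α → α} (hf : Function.Involutive f) (c : Chain α) :
    push f (push f c) = c := by
  have : push f ∘ₗ push f = LinearMap.id :=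
    chain_ext fun l => by simp [hf.comp_self]
  exact LinearMap.congr_fun this c

theorem push_id (c : Chain α) : push id c = c := by
  have : push (id : α → α) = LinearMap.id := chain_ext fun l => by simp
  exact LinearMap.congr_fun this c

theorem boundary_prismOn (f g : α → β) (l : List α) :
    boundary (prismOn f g l) =
      simplex (l.map f) + simplex (l.map g) + prism f g (facets l) := by
  induction l with
  | nil => simp [prismOn, facets, ZModModule.add_self]
  | cons a l ih =>
    simp only [prismOn, facets, map_add, boundary_simplex, boundary_cone, ih, prism_cone,
      push_facets, prism_simplex, cone_simplex, List.map_cons]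
    have h := ZModModule.add_self (simplex (f a :: l.map g))
    rw [← two_zsmul] at h
    abel_nf at h ⊢
    simp only [h, zero_add]

theorem boundary_prism (f g : α → β) (c : Chain α) :
    boundary (prism f g c) = push f c + push g c + prism f g (boundary c) := by
  have : boundary ∘ₗ prism f g = push f + push g + prism f g ∘ₗ boundary :=
    chain_ext fun l => by simp [boundary_prismOn]
  exact LinearMap.congr_fun this c

/-- A filling of a cycle obtained by moving it along a discrete homotopy and coning off. -/
noncomputable def fill (φ : ℕ → α → α) (N : ℕ) (p : α) (z : Chain α) : Chain α :=
  ∑ j ∈ Finset.range N, prism (φ j) (φ (j + 1)) z + cone p (push (φ N) z)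

theorem boundary_fill {φ : ℕ → α → α} {N : ℕ} {p : α} {z : Chain α} (hz : boundary z = 0) :
    boundary (fill φ N p z) = push (φ 0) z := by
  have key : ∀ n, ∑ j ∈ Finset.range n, boundary (prism (φ j) (φ (j + 1)) z) =
      push (φ 0) z + push (φ n) z := by
    intro n
    induction n with
    | zero => simp [ZModModule.add_self]
    | succ n ih =>
      rw [Finset.sum_range_succ, ih, boundary_prism, hz, map_zero, add_zero, add_assoc,
        ← add_assoc (push (φ n) z), ZModModule.add_self, zero_add]
  rw [fill, map_add, map_sum, key, boundary_cone, boundary_push, hz, map_zero, map_zero,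
    add_zero, add_assoc, ZModModule.add_self, add_zero]

/-- The chains all of whose tuples satisfy `P`. -/
abbrev chainsOn (P : List α → Prop) : Submodule (ZMod 2) (Chain α) :=
  Finsupp.supported (ZMod 2) (ZMod 2) {l | P l}

theorem simplex_mem {P : List α → Prop} {l : List α} (h : P l) : simplex l ∈ chainsOn P :=
  Finsupp.single_mem_supported _ _ h

theorem map_mem_of_simplex {M : Type*} [AddCommMonoid M] [Module (ZMod 2) M]
    {P : List α → Prop} {T : Chain α →ₗ[ZMod 2] M} {V : Submodule (ZMod 2) M}
    (h : ∀ l, P l → T (simplex l) ∈ V) {c : Chain α} (hc : c ∈ chainsOn P) : T c ∈ V := by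
  rw [chainsOn, Finsupp.supported_eq_span_single] at hc
  have : Submodule.span (ZMod 2) ((fun l => simplex l) '' {l | P l}) ≤ V.comap T := by
    rw [Submodule.span_le]
    rintro _ ⟨l, hl, rfl⟩
    exact h l hl
  exact this hc

theorem eq_on_of_simplex {M : Type*} [AddCommGroup M] [Module (ZMod 2) M]
    {P : List α → Prop} {S T : Chain α →ₗ[ZMod 2] M}
    (h : ∀ l, P l → S (simplex l) = T (simplex l)) {c : Chain α} (hc : c ∈ chainsOn P) :
    S c = T c := by
  have := map_mem_of_simplex (T := S - T) (V := ⊥)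
    (fun l hl => by simpa [sub_eq_zero] using h l hl) hc
  simpa [sub_eq_zero] using this

theorem cone_mem {P Q : List α → Prop} {a : α} (h : ∀ l, P l → Q (a :: l)) {c : Chain α}
    (hc : c ∈ chainsOn P) : cone a c ∈ chainsOn Q :=
  map_mem_of_simplex (fun l hl => by simpa using simplex_mem (h l hl)) hc

theorem push_mem {P : List α → Prop} {Q : List β → Prop} {f : α → β}
    (h : ∀ l, P l → Q (l.map f)) {c : Chain α} (hc : c ∈ chainsOn P) : push f c ∈ chainsOn Q :=
  map_mem_of_simplex (fun l hl => by simpa using simplex_mem (h l hl)) hc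

theorem facets_mem (l : List α) : facets l ∈ chainsOn (List.Sublist · l) := by
  induction l with
  | nil => exact zero_mem _
  | cons a l ih =>
    exact add_mem (simplex_mem (List.sublist_cons_self a l))
      (cone_mem (fun m hm => hm.cons_cons a) ih)

theorem prismOn_mem (f g : α → β) (l : List α) :
    prismOn f g l ∈ chainsOn fun m =>
      m.length = l.length + 1 ∧ ∀ x ∈ m, ∃ y ∈ l, x = f y ∨ x = g y := by
  induction l with
  | nil => exact zero_mem _
  | cons a l ih =>
    refine add_mem (simplex_mem ⟨by simp, ?_⟩) (cone_mem ?_ ih)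
    · simp only [List.mem_cons, List.mem_map]
      grind
    · rintro m ⟨hm, h⟩
      refine ⟨by simp [hm], ?_⟩
      simp only [List.mem_cons]
      grind

end Chains

section Alternation

/-- The indicator of sign sequences that alternate, starting with `s`. -/
def alt : Bool → List Bool → ZMod 2
  | _, [] => 1
  | s, b :: l => if b = s then alt (!s) l else 0

theorem alt_map_not (s : Bool) (l : List Bool) : alt s (l.map not) = alt (!s) l := by
  induction l generalizing s with
  | nil => rfl
  | cons b l ih => cases b <;> cases s <;> simp [alt, ih]

theorem alt_facets (s : Bool) (l : List Bool) :
    Finsupp.linearCombination (ZMod 2) (alt s) (facets l) = alt s l + alt (!s) l := by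
  have hcone : ∀ s b (c : Chain Bool), Finsupp.linearCombination (ZMod 2) (alt s) (cone b c) =
      if b = s then Finsupp.linearCombination (ZMod 2) (alt (!s)) c else 0 := by
    intro s b c
    by_cases h : b = s
    · have : Finsupp.linearCombination (ZMod 2) (alt s) ∘ₗ cone b =
          Finsupp.linearCombination (ZMod 2) (alt (!s)) := chain_ext fun l => by simp [alt, h]
      rw [if_pos h, ← this, LinearMap.comp_apply]
    · have : Finsupp.linearCombination (ZMod 2) (alt s) ∘ₗ cone b = 0 :=
        chain_ext fun l => by simp [alt, h]
      rw [if_neg h, ← LinearMap.comp_apply, this, LinearMap.zero_apply]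
  induction l generalizing s with
  | nil => simp [facets, alt, ZModModule.add_self]
  | cons b l ih =>
    rw [facets, map_add, hcone, ih]
    have h := ZModModule.add_self (alt s l)
    cases b <;> cases s <;> simp [alt] at h ⊢ <;> linear_combination h

variable {ι : Type*} [LinearOrder ι]

/-- The label opposite to a given one. -/
def opp (a : ι ×ₗ Bool) : ι ×ₗ Bool := toLex ((ofLex a).1, !(ofLex a).2)

/-- The indicator of tuples of labels whose signs, after sorting, alternate starting with `s`. -/
def altSorted (s : Bool) (l : List (ι ×ₗ Bool)) : ZMod 2 :=
  alt s (((l : Multiset (ι ×ₗ Bool)).sort (· ≤ ·)).map fun a => (ofLex a).2)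

theorem altSorted_perm (s : Bool) {l m : List (ι ×ₗ Bool)} (h : l.Perm m) :
    altSorted s l = altSorted s m := by
  rw [altSorted, altSorted, Multiset.coe_eq_coe.2 h]

theorem altSorted_of_pairwise (s : Bool) {l : List (ι ×ₗ Bool)} (h : l.Pairwise (· ≤ ·)) :
    altSorted s l = alt s (l.map fun a => (ofLex a).2) := by
  rw [altSorted, Multiset.coe_sort, List.mergeSort_eq_self _ h]

theorem linearCombination_facets_perm {α : Type*} {ψ : List α → ZMod 2}
    (hψ : ∀ l m : List α, l.Perm m → ψ l = ψ m) {l m : List α} (h : l.Perm m) :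
    Finsupp.linearCombination (ZMod 2) ψ (facets l) =
      Finsupp.linearCombination (ZMod 2) ψ (facets m) := by
  have hcone : ∀ (ψ : List α → ZMod 2) (a : α) (c : Chain α),
      Finsupp.linearCombination (ZMod 2) ψ (cone a c) =
        Finsupp.linearCombination (ZMod 2) (fun l => ψ (a :: l)) c := by
    intro ψ a c
    have : Finsupp.linearCombination (ZMod 2) ψ ∘ₗ cone a =
        Finsupp.linearCombination (ZMod 2) (fun l => ψ (a :: l)) := chain_ext fun l => by simp
    exact LinearMap.congr_fun this c
  induction h generalizing ψ with
  | nil => rfl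
  | cons a h ih =>
    simp only [facets, map_add, hcone, ih fun l m h => hψ _ _ (h.cons a),
      Finsupp.linearCombination_single, hψ _ _ h]
  | swap a b l =>
    have : (fun l => ψ (a :: b :: l)) = fun l => ψ (b :: a :: l) :=
      funext fun l => hψ _ _ (List.Perm.swap b a l)
    simp only [facets, map_add, hcone, cone_simplex, Finsupp.linearCombination_single, this]
    abel
  | trans _ _ ih₁ ih₂ => exact (ih₁ hψ).trans (ih₂ hψ)

theorem altSorted_facets (s : Bool) (l : List (ι ×ₗ Bool)) :
    Finsupp.linearCombination (ZMod 2) (altSorted s) (facets l) =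
      altSorted s l + altSorted (!s) l := by
  set m := (l : Multiset (ι ×ₗ Bool)).sort (· ≤ ·) with hm
  have hlm : l.Perm m := Multiset.coe_eq_coe.1 (Multiset.sort_eq _ _).symm
  have hs : m.Pairwise (· ≤ ·) := Multiset.pairwise_sort _ _
  rw [linearCombination_facets_perm (fun _ _ => altSorted_perm s) hlm, altSorted_perm s hlm,
    altSorted_perm (!s) hlm, altSorted_of_pairwise s hs, altSorted_of_pairwise (!s) hs,
    ← alt_facets, ← push_facets, ← LinearMap.comp_apply]
  refine eq_on_of_simplex (fun k hk => ?_) (facets_mem m)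
  simp [altSorted_of_pairwise s (hs.sublist hk)]

/-- Tuples of labels without opposite pairs. -/
def NoOpp (l : List (ι ×ₗ Bool)) : Prop := ∀ a ∈ l, ∀ b ∈ l, b ≠ opp a

theorem altSorted_map_opp (s : Bool) {l : List (ι ×ₗ Bool)} (hl : NoOpp l) :
    altSorted s (l.map opp) = altSorted (!s) l := by
  set m := (l : Multiset (ι ×ₗ Bool)).sort (· ≤ ·) with hm
  have hlm : l.Perm m := Multiset.coe_eq_coe.1 (Multiset.sort_eq _ _).symm
  have hs : m.Pairwise (· ≤ ·) := Multiset.pairwise_sort _ _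
  have hs' : (m.map opp).Pairwise (· ≤ ·) := by
    rw [List.pairwise_map]
    refine hs.imp_of_mem fun {a b} ha hb hab => ?_
    have hne := hl a (hlm.mem_iff.2 ha) b (hlm.mem_iff.2 hb)
    rw [Prod.Lex.le_iff] at hab ⊢
    rcases hab with h | ⟨h, -⟩
    · exact Or.inl h
    · refine Or.inr ⟨h, ?_⟩
      have : (ofLex b).2 = (ofLex a).2 := by
        by_contra hc
        exact hne (ofLex.injective (Prod.ext h.symm (Bool.eq_not.2 hc)))
      simp [opp, this]
  rw [altSorted_perm s (hlm.map opp), altSorted_perm (!s) hlm, altSorted_of_pairwise s hs',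
    altSorted_of_pairwise (!s) hs, ← alt_map_not, List.map_map, List.map_map]
  rfl

theorem length_le_of_altSorted_ne_zero [Fintype ι] {s : Bool} {l : List (ι ×ₗ Bool)}
    (hl : NoOpp l) (h : altSorted s l ≠ 0) : l.length ≤ Fintype.card ι := by
  set m := (l : Multiset (ι ×ₗ Bool)).sort (· ≤ ·) with hm
  have hlm : l.Perm m := Multiset.coe_eq_coe.1 (Multiset.sort_eq _ _).symm
  have hs : m.Pairwise (· ≤ ·) := Multiset.pairwise_sort _ _
  have hno : NoOpp m := fun a ha b hb => hl a (hlm.mem_iff.2 ha) b (hlm.mem_iff.2 hb)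
  rw [altSorted_perm s hlm, altSorted_of_pairwise s hs] at h
  have key : ∀ (m : List (ι ×ₗ Bool)) (s : Bool), m.Pairwise (· ≤ ·) → NoOpp m →
      alt s (m.map fun a => (ofLex a).2) ≠ 0 →
      (m.map fun a => (ofLex a).1).IsChain (· < ·) := by
    intro m
    induction m with
    | nil => simp
    | cons a m ih =>
      intro s hs hno h
      have ha : (ofLex a).2 = s := by
        by_contra hc
        simp [alt, hc] at h
      have ht : alt (!s) (m.map fun a => (ofLex a).2) ≠ 0 := by simpa [alt, ha] using h
      have ih := ih (!s) hs.of_cons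
        (fun a ha b hb => hno a (List.mem_cons_of_mem _ ha) b (List.mem_cons_of_mem _ hb)) ht
      cases m with
      | nil => simp
      | cons b m =>
        refine List.IsChain.cons_cons ?_ ih
        have hb : (ofLex b).2 = !s := by
          by_contra hc
          simp [alt, hc] at ht
        have hab : a ≤ b := List.rel_of_pairwise_cons hs (by simp)
        rw [Prod.Lex.le_iff] at hab
        refine hab.resolve_right fun h => hno a (by simp) b (by simp) ?_
        exact ofLex.injective (Prod.ext h.1.symm (by simp [opp, ha, hb]))
  have hnd := (List.isChain_iff_pairwise.1 (key m s hs hno h)).imp fun hab => ne_of_lt hab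
  simpa [hlm.length_eq] using List.Nodup.length_le_card hnd

end Alternation

section AlternationCount

variable {ι α : Type*} [LinearOrder ι]

/-- The number mod 2 of tuples in a chain whose sorted labels alternate in sign, starting with
`s`. -/
noncomputable def altCount (lab : α → ι ×ₗ Bool) (s : Bool) : Chain α →ₗ[ZMod 2] ZMod 2 :=
  Finsupp.linearCombination (ZMod 2) (altSorted s) ∘ₗ push lab

@[simp] theorem altCount_simplex (lab : α → ι ×ₗ Bool) (s : Bool) (l : List α) :
    altCount lab s (simplex l) = altSorted s (l.map lab) := by
  simp [altCount]

theorem altCount_boundary (lab : α → ι ×ₗ Bool) (s : Bool) (c : Chain α) :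
    altCount lab s (boundary c) = altCount lab s c + altCount lab (!s) c := by
  have : altCount lab s ∘ₗ boundary = altCount lab s + altCount lab (!s) :=
    chain_ext fun l => by
      simp only [LinearMap.comp_apply, boundary_simplex, LinearMap.add_apply, altCount_simplex]
      rw [altCount, LinearMap.comp_apply, push_facets, altSorted_facets]
  exact LinearMap.congr_fun this c

theorem altCount_push {lab : α → ι ×ₗ Bool} {τ : α → α} {P : List α → Prop}
    (hodd : ∀ l, P l → ∀ x ∈ l, lab (τ x) = opp (lab x)) (hno : ∀ l, P l → NoOpp (l.map lab))
    (s : Bool) {c : Chain α} (hc : c ∈ chainsOn P) :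
    altCount lab s (push τ c) = altCount lab (!s) c := by
  rw [← LinearMap.comp_apply]
  refine eq_on_of_simplex (fun l hl => ?_) hc
  have : (l.map τ).map lab = (l.map lab).map opp := by
    simpa using hodd l hl
  rw [LinearMap.comp_apply, push_simplex, altCount_simplex, this, altSorted_map_opp s (hno l hl),
    altCount_simplex]

end AlternationCount

section Octahedron

variable {n : ℕ}

/-- The unit sphere of the `ℓ¹` norm. -/
def crossPolytope (n : ℕ) : Set (EuclideanSpace ℝ (Fin (n + 1))) := {x | ∑ i, |x i| = 1}

theorem norm_le_one_of_mem_crossPolytope {x : EuclideanSpace ℝ (Fin (n + 1))}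
    (hx : x ∈ crossPolytope n) : ‖x‖ ≤ 1 := by
  have hx : ∑ i, |x i| = 1 := hx
  have h1 : ∀ i, |x i| ≤ 1 := fun i =>
    hx ▸ Finset.single_le_sum (f := fun i => |x i|) (fun j _ => abs_nonneg _) (Finset.mem_univ i)
  have h2 : ‖x‖ ^ 2 ≤ 1 := by
    rw [EuclideanSpace.norm_sq_eq, ← hx]
    refine Finset.sum_le_sum fun i _ => ?_
    rw [Real.norm_eq_abs]
    nlinarith [h1 i, abs_nonneg (x i)]
  nlinarith [norm_nonneg x]

theorem ne_zero_of_mem_crossPolytope {x : EuclideanSpace ℝ (Fin (n + 1))}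
    (hx : x ∈ crossPolytope n) : x ≠ 0 := by
  rintro rfl
  simp [crossPolytope] at hx

theorem isCompact_crossPolytope (n : ℕ) : IsCompact (crossPolytope n) := by
  refine Metric.isCompact_of_isClosed_isBounded ?_ ?_
  · exact isClosed_eq (by fun_prop) continuous_const
  · refine (Metric.isBounded_closedBall (x := 0) (r := 1)).subset fun x hx => ?_
    simpa using norm_le_one_of_mem_crossPolytope hx

theorem neg_mem_crossPolytope {x : EuclideanSpace ℝ (Fin (n + 1))}
    (hx : x ∈ crossPolytope n) : -x ∈ crossPolytope n := by
  simpa [crossPolytope] using hx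

theorem single_mem_crossPolytope (i : Fin (n + 1)) :
    EuclideanSpace.single i (1 : ℝ) ∈ crossPolytope n := by
  simp [crossPolytope, apply_ite abs]

theorem lineMap_mem_crossPolytope {x : EuclideanSpace ℝ (Fin (n + 1))}
    (hx : x ∈ crossPolytope n) {i : Fin (n + 1)} (hi : x i = 0) {t : ℝ} (h0 : 0 ≤ t)
    (h1 : t ≤ 1) : AffineMap.lineMap x (EuclideanSpace.single i (1 : ℝ)) t ∈ crossPolytope n := by
  have key : ∀ j, |AffineMap.lineMap x (EuclideanSpace.single i (1 : ℝ)) t j| =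
      (1 - t) * |x j| + if j = i then t else 0 := by
    intro j
    rw [AffineMap.lineMap_apply_module]
    by_cases hj : j = i
    · subst hj
      simp [hi, abs_of_nonneg h0]
    · simp [hj, abs_mul, abs_of_nonneg (sub_nonneg.2 h1)]
  have hx : ∑ i, |x i| = 1 := hx
  simp [crossPolytope, key, Finset.sum_add_distrib, ← Finset.mul_sum, hx]

/-- Tuples of `k + 1` points of the standard `k`-dimensional subsphere of the cross-polytope with
mutual distances at most `δ * k`. -/
def Fine (n : ℕ) (δ : ℝ) (k : ℕ) (l : List (EuclideanSpace ℝ (Fin (n + 1)))) : Prop :=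
  l.length = k + 1 ∧ (∀ x ∈ l, x ∈ crossPolytope n ∧ ∀ i : Fin (n + 1), k < i → x i = 0) ∧
    ∀ x ∈ l, ∀ y ∈ l, dist x y ≤ δ * k

theorem Fine.neg {δ : ℝ} {k : ℕ} {l : List (EuclideanSpace ℝ (Fin (n + 1)))}
    (h : Fine n δ k l) : Fine n δ k (l.map (-·)) := by
  obtain ⟨h1, h2, h3⟩ := h
  refine ⟨by simpa using h1, ?_, ?_⟩
  · simp only [List.mem_map]
    rintro _ ⟨x, hx, rfl⟩
    exact ⟨neg_mem_crossPolytope (h2 x hx).1, fun i hi => by simp [(h2 x hx).2 i hi]⟩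
  · simp only [List.mem_map]
    rintro _ ⟨x, hx, rfl⟩ _ ⟨y, hy, rfl⟩
    simpa using h3 x hx y hy

theorem exists_fine_filling {δ : ℝ} (hδ : 0 < δ) {k : ℕ} (hk : k + 1 ≤ n)
    {z : Chain (EuclideanSpace ℝ (Fin (n + 1)))} (hz : z ∈ chainsOn (Fine n δ k))
    (hz0 : boundary z = 0) : ∃ c ∈ chainsOn (Fine n δ (k + 1)), boundary c = z := by
  obtain ⟨N, hN⟩ := exists_nat_gt (2 / δ)
  have hNpos : (0 : ℝ) < N := lt_trans (by positivity) hN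
  rw [div_lt_iff₀ hδ] at hN
  set i₀ : Fin (n + 1) := ⟨k + 1, by omega⟩ with hi₀
  set p : EuclideanSpace ℝ (Fin (n + 1)) := EuclideanSpace.single i₀ (1 : ℝ) with hp
  have hpS : p ∈ crossPolytope n := single_mem_crossPolytope i₀
  have hp0 : ∀ i : Fin (n + 1), k + 1 < (i : ℕ) → p i = 0 := by
    intro i hi
    have : i ≠ i₀ := by
      rintro rfl
      simp [hi₀] at hi
    simp [hp, this]
  set φ : ℕ → EuclideanSpace ℝ (Fin (n + 1)) → EuclideanSpace ℝ (Fin (n + 1)) :=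
    fun j x => AffineMap.lineMap x p ((j : ℝ) / N) with hφ
  have hφ0 : φ 0 = id := by
    ext x
    simp [hφ]
  have hφN : ∀ x, φ N x = p := by
    intro x
    simp [hφ, div_self hNpos.ne']
  refine ⟨fill φ N p z, ?_, by rw [boundary_fill hz0, hφ0, push_id]⟩
  refine add_mem (sum_mem fun j hj => ?_) ?_
  · refine map_mem_of_simplex (fun l hl => ?_) hz
    obtain ⟨hlen, hmem, hdist⟩ := hl
    rw [prism_simplex]
    refine Finsupp.supported_mono ?_ (prismOn_mem (φ j) (φ (j + 1)) l)
    rintro m ⟨hm, hml⟩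
    have hml : ∀ x ∈ m, ∃ y ∈ l, ∃ r : ℕ, (r = j ∨ r = j + 1) ∧ x = φ r y := by
      intro x hx
      obtain ⟨y, hy, h | h⟩ := hml x hx
      · exact ⟨y, hy, j, Or.inl rfl, h⟩
      · exact ⟨y, hy, j + 1, Or.inr rfl, h⟩
    have hjN : j < N := Finset.mem_range.1 hj
    refine ⟨by simp [hm, hlen], fun x hx => ?_, fun x hx x' hx' => ?_⟩
    · obtain ⟨y, hy, r, hr, rfl⟩ := hml x hx
      have hrN : (r : ℝ) ≤ N := by
        exact_mod_cast (by omega : r ≤ N)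
      refine ⟨lineMap_mem_crossPolytope (hmem y hy).1 ((hmem y hy).2 i₀ (by simp [hi₀]))
        (by positivity) ((div_le_one hNpos).2 hrN), fun i hi => ?_⟩
      simp [hφ, AffineMap.lineMap_apply_module, hp0 i hi, (hmem y hy).2 i (by omega)]
    · obtain ⟨y, hy, r, hr, rfl⟩ := hml x hx
      obtain ⟨y', hy', r', hr', rfl⟩ := hml x' hx'
      have hrN : (r : ℝ) ≤ N := by
        exact_mod_cast (by omega : r ≤ N)
      have hsame : dist (φ r y) (φ r y') ≤ dist y y' := by
        have h0 : 0 ≤ 1 - (r : ℝ) / N := sub_nonneg.2 ((div_le_one hNpos).2 hrN)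
        have h1 : 0 ≤ (r : ℝ) / N := by positivity
        simp only [hφ, AffineMap.lineMap_apply_module, dist_add_right]
        rw [dist_smul₀, Real.norm_of_nonneg h0]
        nlinarith [dist_nonneg (x := y) (y := y')]
      have hmove : dist (φ r y') (φ r' y') ≤ δ := by
        have h2 : dist y' p ≤ 2 := by
          have := norm_le_one_of_mem_crossPolytope (hmem y' hy').1
          have := norm_le_one_of_mem_crossPolytope hpS
          have := dist_le_norm_add_norm y' p
          linarith
        have h1 : dist ((r : ℝ) / N) ((r' : ℝ) / N) ≤ 1 / N := by
          rw [Real.dist_eq, ← sub_div, abs_div, abs_of_pos hNpos]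
          gcongr
          rcases hr with rfl | rfl <;> rcases hr' with rfl | rfl <;> simp
        simp only [hφ]
        rw [dist_lineMap_lineMap]
        calc dist ((r : ℝ) / N) ((r' : ℝ) / N) * dist y' p ≤ 1 / N * 2 := by gcongr
          _ ≤ δ := by
            rw [one_div_mul_eq_div, div_le_iff₀ hNpos]
            linarith
      have := dist_triangle (φ r y) (φ r y') (φ r' y')
      have := hdist y hy y' hy'
      push_cast
      linarith
  · refine cone_mem (P := fun l => l.length = k + 1 ∧ ∀ x ∈ l, x = p) ?_
      (push_mem (fun l hl => ?_) hz)
    · rintro l ⟨hl, h⟩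
      have h : ∀ x ∈ p :: l, x = p := by simpa using h
      refine ⟨by simp [hl], fun x hx => ?_, fun x hx y hy => ?_⟩
      · rw [h x hx]
        exact ⟨hpS, fun i hi => hp0 i (by simpa using hi)⟩
      · rw [h x hx, h y hy, dist_self]
        positivity
    · exact ⟨by simpa using hl.1, by simp [hφN]⟩

/-- Fan's lemma: an antipodal labelling of the cross-polytope without opposite labels at close
points has small tuples with alternating labels. -/
theorem exists_fine_chain {ι : Type*} [LinearOrder ι]
    {lab : EuclideanSpace ℝ (Fin (n + 1)) → ι ×ₗ Bool}
    (hodd : ∀ x ∈ crossPolytope n, lab (-x) = opp (lab x)) {δ : ℝ} (hδ : 0 < δ)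
    (hno : ∀ x ∈ crossPolytope n, ∀ y ∈ crossPolytope n, dist x y ≤ δ * n → lab y ≠ opp (lab x))
    {k : ℕ} (hk : k ≤ n) :
    ∃ c ∈ chainsOn (Fine n δ k), boundary (c + push (-·) c) = 0 ∧
      altCount lab true c + altCount lab false c = 1 := by
  induction k with
  | zero =>
    set p : EuclideanSpace ℝ (Fin (n + 1)) := EuclideanSpace.single 0 (1 : ℝ) with hp
    refine ⟨simplex [p], simplex_mem ⟨rfl, ?_, by simp⟩, ?_, ?_⟩
    · simp only [List.mem_singleton, forall_eq]
      refine ⟨single_mem_crossPolytope 0, fun i hi => ?_⟩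
      have : i ≠ 0 := by
        rintro rfl
        simp at hi
      simp [hp, this]
    · simp [facets, ZModModule.add_self]
    · simp only [altCount_simplex, List.map_cons, List.map_nil]
      rw [altSorted_of_pairwise _ (by simp), altSorted_of_pairwise _ (by simp)]
      cases h : (ofLex (lab p)).2 <;> simp [alt, h]
  | succ k ih =>
    obtain ⟨c, hc, hb, h1⟩ := ih (by omega)
    obtain ⟨d, hd, hdb⟩ := exists_fine_filling hδ hk
      (add_mem hc (push_mem (fun l hl => Fine.neg hl) hc)) hb
    refine ⟨d, hd, ?_, ?_⟩
    · rw [map_add, boundary_push, hdb, map_add, push_push_of_involutive neg_involutive,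
        add_comm (push _ c), ZModModule.add_self]
    · have h := altCount_boundary lab true d
      rw [hdb, map_add, altCount_push (P := Fine n δ k) (fun l hl x hx => hodd x (hl.2.1 x hx).1)
        (fun l hl => ?_) true hc] at h
      · exact h.symm.trans h1
      · simp only [NoOpp, List.mem_map]
        rintro _ ⟨x, hx, rfl⟩ _ ⟨y, hy, rfl⟩
        refine hno x (hl.2.1 x hx).1 y (hl.2.1 y hy).1 ((hl.2.2 x hx y hy).trans ?_)
        gcongr
        omega

theorem card_lt_of_labelling {ι : Type*} [LinearOrder ι] [Fintype ι]
    {lab : EuclideanSpace ℝ (Fin (n + 1)) → ι ×ₗ Bool}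
    (hodd : ∀ x ∈ crossPolytope n, lab (-x) = opp (lab x)) {ε : ℝ} (hε : 0 < ε)
    (hno : ∀ x ∈ crossPolytope n, ∀ y ∈ crossPolytope n, dist x y < ε → lab y ≠ opp (lab x)) :
    n < Fintype.card ι := by
  obtain ⟨δ, hδ, hδε⟩ : ∃ δ : ℝ, 0 < δ ∧ δ * n < ε := by
    refine ⟨ε / (n + 1), by positivity, ?_⟩
    rw [div_mul_eq_mul_div, div_lt_iff₀ (by positivity)]
    nlinarith
  obtain ⟨c, hc, -, h1⟩ := exists_fine_chain hodd hδ
    (fun x hx y hy h => hno x hx y hy (h.trans_lt hδε)) le_rfl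
  by_contra hcard
  have hzero : ∀ s, altCount lab s c = 0 := by
    intro s
    rw [← LinearMap.zero_apply (σ₁₂ := RingHom.id (ZMod 2)) (M := Chain _) c]
    refine eq_on_of_simplex (fun l hl => ?_) hc
    rw [altCount_simplex, LinearMap.zero_apply]
    by_contra h
    have := length_le_of_altSorted_ne_zero ?_ h
    · rw [List.length_map, hl.1] at this
      omega
    · simp only [NoOpp, List.mem_map]
      rintro _ ⟨x, hx, rfl⟩ _ ⟨y, hy, rfl⟩
      exact hno x (hl.2.1 x hx).1 y (hl.2.1 y hy).1 ((hl.2.2 x hx y hy).trans_lt hδε)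
  simp [hzero] at h1

theorem exists_zero_of_odd {G : EuclideanSpace ℝ (Fin (n + 1)) → Fin n → ℝ}
    (hG : ContinuousOn G (crossPolytope n)) (hodd : ∀ x, G (-x) = -G x) :
    ∃ x ∈ crossPolytope n, G x = 0 := by
  by_contra! hne
  have hS := isCompact_crossPolytope n
  have hp : EuclideanSpace.single 0 (1 : ℝ) ∈ crossPolytope n := single_mem_crossPolytope 0
  have hn : Nonempty (Fin n) := by
    by_contra h
    rw [not_nonempty_iff] at h
    exact hne _ hp (Subsingleton.elim _ _)
  have hF : ∀ v : Fin n → ℝ, ∃ i, ∀ j, v j ≤ v i := fun v => Finite.exists_max v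
  choose F hF using hF
  set ind : EuclideanSpace ℝ (Fin (n + 1)) → Fin n := fun x => F fun i => |G x i| with hind
  have hind_max : ∀ x i, |G x i| ≤ |G x (ind x)| := fun x i => hF (fun i => |G x i|) i
  have hind_neg : ∀ x, ind (-x) = ind x := by
    intro x
    simp [hind, hodd]
  obtain ⟨x₀, hx₀, hmin⟩ := hS.exists_isMinOn ⟨_, hp⟩ hG.norm
  set m := ‖G x₀‖ with hm
  have hm0 : 0 < m := norm_pos_iff.2 (hne x₀ hx₀)
  have hind_ge : ∀ x ∈ crossPolytope n, m ≤ |G x (ind x)| := fun x hx =>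
    (isMinOn_iff.1 hmin x hx).trans ((pi_norm_le_iff_of_nonneg (abs_nonneg _)).2 (hind_max x))
  obtain ⟨ε, hε, hunif⟩ := Metric.uniformContinuousOn_iff.1
    (hS.uniformContinuousOn_of_continuous hG) m hm0
  have hcard := card_lt_of_labelling (lab := fun x => toLex (ind x, decide (0 < G x (ind x))))
    (fun x hx => ?_) hε (fun x hx y hy hxy h => ?_)
  · simp at hcard
  · have : G x (ind x) ≠ 0 := abs_pos.1 (hm0.trans_le (hind_ge x hx))
    have : decide (G x (ind x) < 0) = !decide (0 < G x (ind x)) := by grind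
    simp only [opp, hind_neg, hodd, Pi.neg_apply, neg_pos, this, ofLex_toLex]
  · obtain ⟨h1, h2⟩ := Prod.ext_iff.1 (toLex.injective h)
    have h1 : ind y = ind x := h1
    have h2 : decide (0 < G y (ind y)) = !decide (0 < G x (ind x)) := h2
    have hd := (dist_le_pi_dist (G x) (G y) (ind x)).trans_lt (hunif x hx y hy hxy)
    have hx' := hind_ge x hx
    have hy' := hind_ge y hy
    rw [h1] at h2 hy'
    rw [Real.dist_eq] at hd
    grind

end Octahedron

end BorsukUlam

theorem borsuk_ulam (n : ℕ)
    (f : Metric.sphere (0 : EuclideanSpace ℝ (Fin (n + 1))) 1 → EuclideanSpace ℝ (Fin n))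
    (hf : Continuous f) :
    ∃ x : Metric.sphere (0 : EuclideanSpace ℝ (Fin (n + 1))) 1, f x = f (-x) := by
  classical
  set F : EuclideanSpace ℝ (Fin (n + 1)) → EuclideanSpace ℝ (Fin n) :=
    fun x => if h : x ∈ Metric.sphere 0 1 then f ⟨x, h⟩ else 0 with hF
  have hFc : ContinuousOn F (Metric.sphere 0 1) := by
    rw [continuousOn_iff_continuous_domRestrict]
    convert hf using 1
    ext x
    simp [hF]
  have hunit : ∀ x ∈ BorsukUlam.crossPolytope n, ‖x‖⁻¹ • x ∈ Metric.sphere 0 1 := by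
    intro x hx
    simp [norm_smul, BorsukUlam.ne_zero_of_mem_crossPolytope hx]
  have hnorm : ContinuousOn (fun x => ‖x‖⁻¹ • x) (BorsukUlam.crossPolytope n) :=
    (continuousOn_id.norm.inv₀ fun x hx =>
      norm_ne_zero_iff.2 (BorsukUlam.ne_zero_of_mem_crossPolytope hx)).smul continuousOn_id
  have hG : ContinuousOn (fun x => (F (‖x‖⁻¹ • x) - F (-(‖x‖⁻¹ • x))).ofLp)
      (BorsukUlam.crossPolytope n) := by
    refine (PiLp.continuous_ofLp 2 _).comp_continuousOn ?_
    refine (hFc.comp hnorm hunit).sub (hFc.comp hnorm.neg fun x hx => ?_)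
    simpa using hunit x hx
  obtain ⟨x, hx, h⟩ := BorsukUlam.exists_zero_of_odd hG fun x => by simp
  have h' : F (‖x‖⁻¹ • x) = F (-(‖x‖⁻¹ • x)) := sub_eq_zero.1 (WithLp.ofLp_injective 2 h)
  have hu := hunit x hx
  have hu' : -(‖x‖⁻¹ • x) ∈ Metric.sphere 0 1 := by simpa using hu
  refine ⟨⟨_, hu⟩, ?_⟩
  simp only [hF, dif_pos hu, dif_pos hu'] at h'
  exact h'
end

section
/- Lusternik–Schnirelmann-type consequence: if S^n (n ≥ 1) is covered by n+1 closed sets F₀, …, F_n, then at least one F_i contains a pair of antipodal points x and −x. -/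
/-! ### Ordered chains modulo two

A simplex is the list of its vertices; the empty list is the augmentation simplex. -/

section Chains

open Finsupp

/-- Chains with coefficients modulo two on ordered simplices with vertices in `V`. -/
abbrev OrderedChain (V : Type*) := List V →₀ ZMod 2

namespace OrderedChain

section Boundary

variable {V W : Type*}

/-- The cone with apex `a`. -/
noncomputable def cone (a : V) : OrderedChain V →ₗ[ZMod 2] OrderedChain V :=
  lmapDomain (ZMod 2) (ZMod 2) (List.cons a)

/-- The chain map induced by a map on vertices. -/
noncomputable def map (f : V → W) : OrderedChain V →ₗ[ZMod 2] OrderedChain W :=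
  lmapDomain (ZMod 2) (ZMod 2) (List.map f)

/-- The boundary of a simplex. -/
noncomputable def simplexBoundary : List V → OrderedChain V
  | [] => 0
  | a :: l => single l 1 + cone a (simplexBoundary l)

/-- The augmented boundary operator. -/
noncomputable def boundary : OrderedChain V →ₗ[ZMod 2] OrderedChain V :=
  linearCombination (ZMod 2) simplexBoundary

@[simp] lemma cone_single (a : V) (l : List V) (r : ZMod 2) :
    cone a (single l r) = single (a :: l) r := by
  simp [cone]

@[simp] lemma map_single (f : V → W) (l : List V) (r : ZMod 2) :
    map f (single l r) = single (l.map f) r := by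
  simp [map]

@[simp] lemma boundary_single (l : List V) :
    boundary (single l 1) = simplexBoundary l := by
  simp [boundary]

lemma linearMap_ext {M : Type*} [AddCommMonoid M] [Module (ZMod 2) M]
    {f g : OrderedChain V →ₗ[ZMod 2] M} (h : ∀ l, f (single l 1) = g (single l 1)) : f = g :=
  Finsupp.lhom_ext' fun l => LinearMap.ext_ring (h l)

lemma boundary_cone (a : V) (c : OrderedChain V) :
    boundary (cone a c) = c + cone a (boundary c) := by
  have : boundary ∘ₗ cone a = LinearMap.id + cone a ∘ₗ boundary :=
    linearMap_ext fun l => by simp [simplexBoundary]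
  exact LinearMap.congr_fun this c

lemma boundary_simplexBoundary (l : List V) : boundary (simplexBoundary l) = 0 := by
  induction l with
  | nil => simp [simplexBoundary]
  | cons a l ih => simp [simplexBoundary, boundary_cone, ih, ZModModule.add_self]

lemma map_cone (f : V → W) (a : V) (c : OrderedChain V) :
    map f (cone a c) = cone (f a) (map f c) := by
  have : map f ∘ₗ cone a = cone (f a) ∘ₗ map f := linearMap_ext fun l => by simp
  exact LinearMap.congr_fun this c

lemma map_simplexBoundary (f : V → W) (l : List V) :
    map f (simplexBoundary l) = simplexBoundary (l.map f) := by
  induction l with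
  | nil => simp [simplexBoundary]
  | cons a l ih => simp [simplexBoundary, map_cone, ih]

lemma map_boundary (f : V → W) (c : OrderedChain V) :
    map f (boundary c) = boundary (map f c) := by
  have : map f ∘ₗ boundary = boundary ∘ₗ map f :=
    linearMap_ext fun l => by simp [map_simplexBoundary]
  exact LinearMap.congr_fun this c

lemma map_mem_of_mem_supported {M : Type*} [AddCommGroup M] [Module (ZMod 2) M]
    {G : Set (List V)} {P : Submodule (ZMod 2) M} {f : OrderedChain V →ₗ[ZMod 2] M}
    (h : ∀ l ∈ G, f (single l 1) ∈ P) {c : OrderedChain V}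
    (hc : c ∈ supported (ZMod 2) (ZMod 2) G) : f c ∈ P := by
  rw [supported_eq_span_single] at hc
  have : Submodule.span (ZMod 2) ((fun l => single l (1 : ZMod 2)) '' G) ≤ P.comap f := by
    rw [Submodule.span_le]
    rintro _ ⟨l, hl, rfl⟩
    exact h l hl
  exact this hc

lemma single_mem_supported_one {G : Set (List V)} {l : List V} (hl : l ∈ G) :
    single l (1 : ZMod 2) ∈ supported (ZMod 2) (ZMod 2) G :=
  single_mem_supported _ _ hl

lemma cone_mem_supported {G H : Set (List V)} {a : V} (h : ∀ l ∈ G, a :: l ∈ H)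
    {c : OrderedChain V} (hc : c ∈ supported (ZMod 2) (ZMod 2) G) :
    cone a c ∈ supported (ZMod 2) (ZMod 2) H :=
  map_mem_of_mem_supported (fun l hl => by
    rw [cone_single]; exact single_mem_supported_one (h l hl)) hc

lemma map_mem_supported {G : Set (List V)} {H : Set (List W)} {f : V → W}
    (h : ∀ l ∈ G, l.map f ∈ H)
    {c : OrderedChain V} (hc : c ∈ supported (ZMod 2) (ZMod 2) G) :
    map f c ∈ supported (ZMod 2) (ZMod 2) H :=
  map_mem_of_mem_supported (fun l hl => by
    rw [map_single]; exact single_mem_supported_one (h l hl)) hc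

lemma simplexBoundary_mem_supported (l : List V) :
    simplexBoundary l ∈
      supported (ZMod 2) (ZMod 2) {t : List V | t.length + 1 = l.length ∧ t ⊆ l} := by
  induction l with
  | nil => exact zero_mem _
  | cons a l ih =>
    refine add_mem (single_mem_supported_one ⟨by simp, by simp⟩) (cone_mem_supported ?_ ih)
    rintro t ⟨ht, hs⟩
    exact ⟨by simpa using ht, List.cons_subset_cons a hs⟩

end Boundary

/-! ### Cup products of coboundaries -/

section Cup

variable {V : Type*}

/-- The cup product of the coboundaries of the vertex functions in `S`, on a simplex. -/
def cupCoboundary : List (V → ZMod 2) → List V → ZMod 2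
  | [], [_] => 1
  | s :: S, x :: y :: l => (s x + s y) * cupCoboundary S (y :: l)
  | _, _ => 0

/-- The cup product of `s` with the coboundaries of the functions in `S`, on a simplex. -/
def cupPrimitive (s : V → ZMod 2) (S : List (V → ZMod 2)) : List V → ZMod 2
  | [] => 0
  | x :: l => s x * cupCoboundary S (x :: l)

/-- `cupCoboundary` as a functional on chains. -/
noncomputable def evalCup (S : List (V → ZMod 2)) : OrderedChain V →ₗ[ZMod 2] ZMod 2 :=
  linearCombination (ZMod 2) (cupCoboundary S)

/-- `cupPrimitive` as a functional on chains. -/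
noncomputable def evalPrimitive (s : V → ZMod 2) (S : List (V → ZMod 2)) :
    OrderedChain V →ₗ[ZMod 2] ZMod 2 :=
  linearCombination (ZMod 2) (cupPrimitive s S)

@[simp] lemma cupCoboundary_nil (S : List (V → ZMod 2)) : cupCoboundary S [] = 0 := by
  cases S <;> rfl

@[simp] lemma evalCup_single (S : List (V → ZMod 2)) (l : List V) :
    evalCup S (single l 1) = cupCoboundary S l := by
  simp [evalCup]

@[simp] lemma evalPrimitive_single (s : V → ZMod 2) (S : List (V → ZMod 2)) (l : List V) :
    evalPrimitive s S (single l 1) = cupPrimitive s S l := by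
  simp [evalPrimitive]

lemma evalPrimitive_cone (s : V → ZMod 2) (S : List (V → ZMod 2)) (x : V) (c : OrderedChain V) :
    evalPrimitive s S (cone x c) = s x * evalCup S (cone x c) := by
  have : evalPrimitive s S ∘ₗ cone x = s x • (evalCup S ∘ₗ cone x) :=
    linearMap_ext fun l => by simp [cupPrimitive]
  exact LinearMap.congr_fun this c

lemma evalPrimitive_simplexBoundary (s : V → ZMod 2) (S : List (V → ZMod 2))
    (hS : ∀ l : List V, evalCup S (simplexBoundary l) = 0) (l : List V) :
    evalPrimitive s S (simplexBoundary l) = cupCoboundary (s :: S) l := by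
  match l with
  | [] => simp [simplexBoundary]
  | [x] => simp [simplexBoundary, cupPrimitive, cupCoboundary]
  | x :: y :: l =>
    have h := hS (x :: y :: l)
    rw [simplexBoundary, map_add, evalCup_single] at h
    have h' : evalCup S (cone x (simplexBoundary (y :: l))) = cupCoboundary S (y :: l) := by
      rw [eq_comm, ← CharTwo.add_eq_zero, h]
    rw [simplexBoundary, map_add, evalPrimitive_single, evalPrimitive_cone, h']
    simp only [cupPrimitive, cupCoboundary]
    ring

lemma evalCup_simplexBoundary (S : List (V → ZMod 2)) (l : List V) :
    evalCup S (simplexBoundary l) = 0 := by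
  induction S generalizing l with
  | nil =>
    match l with
    | [] => simp [simplexBoundary]
    | [x] => simp [simplexBoundary]
    | [x, y] =>
      simp only [simplexBoundary, map_add, cone_single, evalCup_single, cupCoboundary, map_zero,
        add_zero]
      decide
    | x :: y :: z :: l =>
      have key : evalCup [] ∘ₗ cone x ∘ₗ cone y = (0 : OrderedChain V →ₗ[ZMod 2] ZMod 2) :=
        linearMap_ext fun l => by simp [cupCoboundary]
      have := LinearMap.congr_fun key (simplexBoundary (z :: l))
      simp only [LinearMap.comp_apply, LinearMap.zero_apply] at this
      rw [simplexBoundary, simplexBoundary]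
      simp [cupCoboundary, this]
  | cons s S ih =>
    have key : evalPrimitive s S ∘ₗ boundary = evalCup (s :: S) :=
      linearMap_ext fun l => by simp [evalPrimitive_simplexBoundary s S ih]
    rw [← key, LinearMap.comp_apply, boundary_simplexBoundary, map_zero]

lemma evalPrimitive_boundary (s : V → ZMod 2) (S : List (V → ZMod 2)) (c : OrderedChain V) :
    evalPrimitive s S (boundary c) = evalCup (s :: S) c := by
  have key : evalPrimitive s S ∘ₗ boundary = evalCup (s :: S) :=
    linearMap_ext fun l => by
      simp [evalPrimitive_simplexBoundary s S (evalCup_simplexBoundary S)]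
  exact LinearMap.congr_fun key c

lemma cupCoboundary_eq_zero {S : List (V → ZMod 2)} {l : List V} {s : V → ZMod 2} (hs : s ∈ S)
    (hl : ∀ x ∈ l, ∀ y ∈ l, s x = s y) : cupCoboundary S l = 0 := by
  induction S generalizing l with
  | nil => simp at hs
  | cons t S ih =>
    match l with
    | [] => rfl
    | [x] => rfl
    | x :: y :: l =>
      rw [cupCoboundary]
      rcases List.mem_cons.1 hs with rfl | hs
      · rw [hl x (by simp) y (by simp), CharTwo.add_self_eq_zero, zero_mul]
      · rw [ih hs fun a ha b hb => hl a (List.mem_cons_of_mem _ ha) b (List.mem_cons_of_mem _ hb),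
          mul_zero]

section Antipodal

variable (T : V → V) {X : Set V}

lemma cupCoboundary_map {S : List (V → ZMod 2)}
    (hS : ∀ s ∈ S, ∀ x ∈ X, s (T x) = s x + 1) {l : List V} (hl : ∀ x ∈ l, x ∈ X) :
    cupCoboundary S (l.map T) = cupCoboundary S l := by
  induction S generalizing l with
  | nil =>
    match l with
    | [] => rfl
    | [x] => rfl
    | x :: y :: l => rfl
  | cons t S ih =>
    match l with
    | [] => rfl
    | [x] => rfl
    | x :: y :: l =>
      have h := ih (fun s hs => hS s (List.mem_cons_of_mem _ hs)) (l := y :: l)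
        fun a ha => hl a (List.mem_cons_of_mem _ ha)
      simp only [List.map_cons] at h ⊢
      simp only [cupCoboundary]
      rw [h, hS t (by simp) x (hl x (by simp)), hS t (by simp) y (hl y (by simp)),
        add_add_add_comm, CharTwo.add_self_eq_zero (1 : ZMod 2), add_zero]

lemma evalPrimitive_add_map {s : V → ZMod 2} {S : List (V → ZMod 2)}
    (hs : ∀ x ∈ X, s (T x) = s x + 1) (hS : ∀ s ∈ S, ∀ x ∈ X, s (T x) = s x + 1)
    {c : OrderedChain V} (hc : c ∈ supported (ZMod 2) (ZMod 2) {l : List V | ∀ x ∈ l, x ∈ X}) :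
    evalPrimitive s S (c + map T c) = evalCup S c := by
  have key : (evalPrimitive s S + evalPrimitive s S ∘ₗ map T - evalCup S) c ∈
      (⊥ : Submodule (ZMod 2) (ZMod 2)) := by
    refine map_mem_of_mem_supported (fun l hl => ?_) hc
    rw [Submodule.mem_bot]
    match l, hl with
    | [], _ => simp [cupPrimitive]
    | x :: l, hl =>
      have h := cupCoboundary_map T hS hl
      rw [List.map_cons] at h
      simp only [LinearMap.sub_apply, LinearMap.add_apply, LinearMap.comp_apply, map_single,
        evalPrimitive_single, evalCup_single, List.map_cons, cupPrimitive, h, hs x (hl x (by simp))]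
      linear_combination CharTwo.add_self_eq_zero (s x * cupCoboundary S (x :: l))
  rw [Submodule.mem_bot] at key
  simpa [sub_eq_zero] using key

/-- The mod two Borsuk–Ulam count: chains `c k`, each bounding the sum of the previous one and its
antipode, pair to one with the cup product of the coboundaries of antisymmetric functions. -/
lemma evalCup_eq_one {n : ℕ} {c : ℕ → OrderedChain V} {a : V} (h0 : c 0 = single [a] 1)
    (hc : ∀ k < n, boundary (c (k + 1)) = c k + map T (c k))
    (hX : ∀ k ≤ n, c k ∈ supported (ZMod 2) (ZMod 2) {l : List V | ∀ x ∈ l, x ∈ X})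
    {S : List (V → ZMod 2)} (hS : ∀ s ∈ S, ∀ x ∈ X, s (T x) = s x + 1) (hn : S.length ≤ n) :
    evalCup S (c S.length) = 1 := by
  induction S with
  | nil => simp [h0, cupCoboundary]
  | cons s S ih =>
    simp only [List.length_cons] at hn ⊢
    have hS' : ∀ s ∈ S, ∀ x ∈ X, s (T x) = s x + 1 :=
      fun t ht => hS t (List.mem_cons_of_mem _ ht)
    rw [← evalPrimitive_boundary, hc _ (by omega),
      evalPrimitive_add_map T (hS s (by simp)) hS' (hX _ (by omega)), ih hS' (by omega)]

end Antipodal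

end Cup

/-! ### Barycentric subdivision -/

section Subdivision

variable {V : Type*} [AddCommGroup V] [Module ℝ V]

/-- The barycenter of the vertices of a simplex. -/
noncomputable def barycenter (l : List V) : V := (l.length : ℝ)⁻¹ • l.sum

/-- Barycentric subdivision of simplices with `k` vertices. -/
noncomputable def subdivide : ℕ → OrderedChain V →ₗ[ZMod 2] OrderedChain V
  | 0 => LinearMap.id
  | k + 1 => linearCombination (ZMod 2)
      fun l => cone (barycenter l) (subdivide k (simplexBoundary l))

lemma subdivide_succ_single (k : ℕ) (l : List V) :
    subdivide (k + 1) (single l 1) = cone (barycenter l) (subdivide k (simplexBoundary l)) := by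
  simp [subdivide]

lemma boundary_subdivide (k : ℕ) (c : OrderedChain V) :
    boundary (subdivide (k + 1) c) = subdivide k (boundary c) := by
  suffices h : boundary ∘ₗ subdivide (k + 1) =
      (subdivide k ∘ₗ boundary : OrderedChain V →ₗ[ZMod 2] OrderedChain V) from
    LinearMap.congr_fun h c
  induction k generalizing c with
  | zero =>
    refine linearMap_ext fun l => ?_
    simp [boundary_cone, subdivide, boundary_simplexBoundary]
  | succ k ih =>
    refine linearMap_ext fun l => ?_
    have h := LinearMap.congr_fun (ih 0) (simplexBoundary l)
    simp only [LinearMap.comp_apply, boundary_simplexBoundary, map_zero] at h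
    simp [subdivide_succ_single, boundary_cone, h]

lemma boundary_subdivide_iterate (k m : ℕ) (c : OrderedChain V) :
    boundary ((subdivide (k + 1))^[m] c) = (subdivide k)^[m] (boundary c) :=
  Function.Semiconj.iterate_right (f := boundary) (boundary_subdivide k) m c

lemma barycenter_map_neg (l : List V) : barycenter (l.map Neg.neg) = -barycenter l := by
  have : (l.map Neg.neg).sum = -l.sum := (List.sum_neg l).symm
  rw [barycenter, barycenter, this, List.length_map, smul_neg]

lemma map_neg_subdivide (k : ℕ) (c : OrderedChain V) :
    map Neg.neg (subdivide k c) = subdivide k (map Neg.neg c) := by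
  suffices h : map Neg.neg ∘ₗ subdivide k =
      (subdivide k ∘ₗ map Neg.neg : OrderedChain V →ₗ[ZMod 2] OrderedChain V) from
    LinearMap.congr_fun h c
  induction k generalizing c with
  | zero => rfl
  | succ k ih =>
    refine linearMap_ext fun l => ?_
    have h := LinearMap.congr_fun (ih 0) (simplexBoundary l)
    simp only [LinearMap.comp_apply] at h
    simp only [LinearMap.comp_apply, subdivide_succ_single, map_cone, map_single, h,
      map_simplexBoundary, barycenter_map_neg]

lemma map_neg_subdivide_iterate (k m : ℕ) (c : OrderedChain V) :
    map Neg.neg ((subdivide k)^[m] c) = (subdivide k)^[m] (map Neg.neg c) :=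
  Function.Semiconj.iterate_right (f := map Neg.neg) (map_neg_subdivide k) m c

lemma subdivide_iterate_vertex (m : ℕ) (a : V) :
    (subdivide 1)^[m] (single [a] 1) = single [a] 1 :=
  Function.iterate_fixed (by
    simp [subdivide, simplexBoundary, barycenter]) m

end Subdivision

/-! ### The mesh of subdivisions -/

section Mesh

variable {V : Type*} [SeminormedAddCommGroup V]

/-- Simplices with `k` vertices, lying in `K`, of diameter at most `d`. -/
def smallSimplices (k : ℕ) (K : Set V) (d : ℝ) : Set (List V) :=
  {l | l.length = k ∧ (∀ p ∈ l, p ∈ K) ∧ ∀ p ∈ l, ∀ q ∈ l, dist p q ≤ d}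

lemma smallSimplices_mono {k : ℕ} {K K' : Set V} (h : K ⊆ K') (d : ℝ) :
    smallSimplices k K d ⊆ smallSimplices k K' d :=
  fun _ hl => ⟨hl.1, fun p hp => h (hl.2.1 p hp), hl.2.2⟩

variable [NormedSpace ℝ V]

lemma barycenter_mem_convexHull {l : List V} (hl : l ≠ []) :
    barycenter l ∈ convexHull ℝ {p | p ∈ l} := by
  have hpos : (0 : ℝ) < l.length := by exact_mod_cast List.length_pos_iff.2 hl
  have hsum : l.sum = ∑ i : Fin l.length, l[i] := by
    simp
  rw [barycenter, hsum, Finset.smul_sum]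
  refine (convex_convexHull ℝ _).sum_mem (fun _ _ => by positivity) ?_ fun i _ =>
    subset_convexHull ℝ _ (List.getElem_mem _)
  simp [hpos.ne']

lemma dist_barycenter_le {l : List V} {d : ℝ} (hd : ∀ p ∈ l, ∀ q ∈ l, dist p q ≤ d) {p : V}
    (hp : p ∈ l) : dist p (barycenter l) ≤ (1 - (l.length : ℝ)⁻¹) * d := by
  have hpos : (0 : ℝ) < l.length := by exact_mod_cast List.length_pos_of_mem hp
  obtain ⟨j, rfl⟩ := List.get_of_mem hp
  have hsum : l.sum = ∑ i : Fin l.length, l.get i := by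
    simp
  have heq : l.get j - barycenter l = (l.length : ℝ)⁻¹ • ∑ i, (l.get j - l.get i) := by
    rw [Finset.sum_sub_distrib, barycenter, hsum, smul_sub]
    congr 1
    simp [← Nat.cast_smul_eq_nsmul ℝ, smul_smul, hpos.ne']
  have hle : ‖∑ i, (l.get j - l.get i)‖ ≤ (l.length - 1 : ℝ) * d := by
    rw [← Finset.sum_erase_add _ _ (Finset.mem_univ j), sub_self, add_zero]
    refine (norm_sum_le_of_le _ (f := fun i => l.get j - l.get i) (n := fun _ => d)
      fun i _ => ?_).trans_eq ?_
    · rw [← dist_eq_norm]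
      exact hd _ (List.get_mem _ _) _ (List.get_mem _ _)
    · rw [Finset.sum_const, Finset.card_erase_of_mem (Finset.mem_univ j), Finset.card_univ,
        Fintype.card_fin, nsmul_eq_mul, Nat.cast_sub (List.length_pos_of_mem hp), Nat.cast_one]
  rw [dist_eq_norm, heq, norm_smul, Real.norm_of_nonneg (by positivity)]
  calc (l.length : ℝ)⁻¹ * _ ≤ (l.length : ℝ)⁻¹ * ((l.length - 1 : ℝ) * d) := by gcongr
    _ = _ := by field_simp

lemma subdivide_single_mem {N k : ℕ} (hk : k ≤ N) {K : Set V} (hK : Convex ℝ K) {d : ℝ}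
    {l : List V} (hl : l ∈ smallSimplices k K d) :
    subdivide k (single l 1) ∈
      supported (ZMod 2) (ZMod 2) (smallSimplices k K ((1 - (N : ℝ)⁻¹) * d)) := by
  induction k generalizing K l with
  | zero =>
    refine single_mem_supported_one ?_
    have : l = [] := List.length_eq_zero_iff.1 hl.1
    subst this
    exact ⟨rfl, by simp, by simp⟩
  | succ k ih =>
    obtain ⟨hlen, hlK, hld⟩ := hl
    have hne : l ≠ [] := by rintro rfl; simp at hlen
    set H := convexHull ℝ {p | p ∈ l} with hH
    have hHK : H ⊆ K := convexHull_min hlK hK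
    refine supported_mono (smallSimplices_mono hHK _) ?_
    have hbd : subdivide k (simplexBoundary l) ∈
        supported (ZMod 2) (ZMod 2) (smallSimplices k H ((1 - (N : ℝ)⁻¹) * d)) := by
      refine map_mem_of_mem_supported (fun t ht => ?_) (simplexBoundary_mem_supported l)
      refine ih (by omega) (convex_convexHull ℝ _) ⟨by have := ht.1; omega, fun p hp => ?_,
        fun p hp q hq => hld _ (ht.2 hp) _ (ht.2 hq)⟩
      exact subset_convexHull ℝ _ (ht.2 hp)
    have hd : 0 ≤ d := by
      obtain ⟨p, hp⟩ := List.exists_mem_of_ne_nil l hne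
      exact dist_nonneg.trans (hld p hp p hp)
    have hN : (1 - (l.length : ℝ)⁻¹) ≤ 1 - (N : ℝ)⁻¹ := by
      have h1 : (0 : ℝ) < l.length := by rw [hlen]; positivity
      have h2 : (l.length : ℝ) ≤ N := by rw [hlen]; exact_mod_cast hk
      gcongr
    have hnear : ∀ p ∈ H, dist p (barycenter l) ≤ (1 - (N : ℝ)⁻¹) * d := by
      refine fun p hp => convexHull_min (t := Metric.closedBall (barycenter l) _) (fun q hq => ?_)
        (convex_closedBall _ _) hp
      exact (dist_barycenter_le hld hq).trans (by gcongr)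
    have hself := hnear _ (barycenter_mem_convexHull hne)
    rw [subdivide_succ_single]
    refine cone_mem_supported (fun t ht => ?_) hbd
    refine ⟨by simp [ht.1], ?_, ?_⟩
    · intro p hp
      rcases List.mem_cons.1 hp with rfl | hp
      · exact barycenter_mem_convexHull hne
      · exact ht.2.1 p hp
    · intro p hp q hq
      rcases List.mem_cons.1 hp with rfl | hp <;> rcases List.mem_cons.1 hq with rfl | hq
      · exact hself
      · rw [dist_comm]; exact hnear q (ht.2.1 q hq)
      · exact hnear p (ht.2.1 p hp)
      · exact ht.2.2 p hp q hq

lemma subdivide_iterate_mem {N k : ℕ} (hk : k ≤ N) {ι : Type*} {K : ι → Set V}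
    (hK : ∀ i, Convex ℝ (K i)) {d : ℝ} {c : OrderedChain V}
    (hc : c ∈ supported (ZMod 2) (ZMod 2) (⋃ i, smallSimplices k (K i) d)) (m : ℕ) :
    (subdivide k)^[m] c ∈ supported (ZMod 2) (ZMod 2)
      (⋃ i, smallSimplices k (K i) ((1 - (N : ℝ)⁻¹) ^ m * d)) := by
  induction m with
  | zero => simpa using hc
  | succ m ih =>
    rw [Function.iterate_succ_apply', pow_succ', mul_assoc]
    refine map_mem_of_mem_supported (fun l hl => ?_) ih
    obtain ⟨i, hi⟩ := Set.mem_iUnion.1 hl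
    exact supported_mono (Set.subset_iUnion_of_subset i subset_rfl)
      (subdivide_single_mem hk (hK i) hi)

end Mesh

/-! ### Hemispheres of the cross-polytope -/

section CrossPolytope

variable {V : Type*} [NormedAddCommGroup V]

/-- A hemisphere of the boundary of the cross-polytope with vertices `± e 0, …, ± e k`. -/
noncomputable def hemisphere (e : ℕ → V) : ℕ → OrderedChain V
  | 0 => single [e 0] 1
  | k + 1 => cone (e (k + 1)) (hemisphere e k + map Neg.neg (hemisphere e k))

lemma map_neg_map_neg (c : OrderedChain V) : map Neg.neg (map Neg.neg c) = c := by
  have : map Neg.neg ∘ₗ map Neg.neg = (LinearMap.id : OrderedChain V →ₗ[ZMod 2] OrderedChain V) :=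
    linearMap_ext fun l => by simp
  exact LinearMap.congr_fun this c

lemma boundary_hemisphere (e : ℕ → V) (k : ℕ) :
    boundary (hemisphere e (k + 1)) = hemisphere e k + map Neg.neg (hemisphere e k) := by
  have hcycle : boundary (hemisphere e k + map Neg.neg (hemisphere e k)) = 0 := by
    rw [map_add, ← map_boundary]
    induction k with
    | zero => simp [hemisphere, simplexBoundary, ZModModule.add_self]
    | succ k ih =>
      rw [hemisphere, boundary_cone, map_add boundary, ← map_boundary, ih, map_zero, add_zero,
        map_add, map_neg_map_neg, add_comm (map Neg.neg (hemisphere e k)), ZModModule.add_self]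
  rw [hemisphere, boundary_cone, hcycle, map_zero, add_zero]

variable [InnerProductSpace ℝ V]

open scoped InnerProductSpace in
lemma hemisphere_mem_supported {e : ℕ → V} {n : ℕ} (he : ∀ i ≤ n, ‖e i‖ = 1)
    (hort : ∀ i j, i ≠ j → ⟪e i, e j⟫_ℝ = 0) {k : ℕ} (hk : k ≤ n) :
    hemisphere e k ∈ supported (ZMod 2) (ZMod 2)
      {l : List V | l.length = k + 1 ∧ ∃ u : V, ‖u‖ ≤ k + 1 ∧ (∀ j > k, ⟪u, e j⟫_ℝ = 0) ∧
        ∀ p ∈ l, ‖p‖ = 1 ∧ ⟪u, p⟫_ℝ = 1 ∧ ∀ j > k, ⟪p, e j⟫_ℝ = 0} := by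
  induction k with
  | zero =>
    refine single_mem_supported_one ⟨rfl, e 0, by simp [he 0 hk], fun j hj => hort _ _ hj.ne, ?_⟩
    simp only [List.mem_singleton, forall_eq]
    exact ⟨he 0 hk, by simp [he 0 hk], fun j hj => hort _ _ hj.ne⟩
  | succ k ih =>
    have ih := ih (by omega)
    refine cone_mem_supported ?_ (add_mem ih (map_mem_supported ?_ ih))
    · rintro l ⟨hl, u, hu, hue, hp⟩
      refine ⟨by simp [hl], u + e (k + 1), ?_, fun j hj => ?_, fun p hpl => ?_⟩
      · refine (norm_add_le _ _).trans ?_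
        rw [he _ hk]
        push_cast
        linarith
      · rw [inner_add_left, hue j (by omega), hort _ _ (by omega), add_zero]
      · rcases List.mem_cons.1 hpl with rfl | hpl
        · refine ⟨he _ hk, ?_, fun j hj => hort _ _ (by omega)⟩
          rw [inner_add_left, hue _ (by omega), real_inner_self_eq_norm_sq, he _ hk]
          norm_num
        · obtain ⟨h1, h2, h3⟩ := hp p hpl
          refine ⟨h1, ?_, fun j hj => h3 j (by omega)⟩
          rw [inner_add_left, h2, real_inner_comm, h3 _ (by omega), add_zero]
    · rintro l ⟨hl, u, hu, hue, hp⟩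
      refine ⟨by simpa using hl, -u, by simpa using hu, fun j hj => by simp [hue j hj], ?_⟩
      intro p hpl
      obtain ⟨q, hq, rfl⟩ := List.mem_map.1 hpl
      obtain ⟨h1, h2, h3⟩ := hp q hq
      exact ⟨by simpa using h1, by simpa using h2, fun j hj => by simp [h3 j hj]⟩

open scoped InnerProductSpace in
/-- Arbitrarily fine subdivisions of the hemispheres of the cross-polytope. -/
lemma exists_fine_hemispheres {e : ℕ → V} {n : ℕ} (he : ∀ i ≤ n, ‖e i‖ = 1)
    (hort : ∀ i j, i ≠ j → ⟪e i, e j⟫_ℝ = 0) {δ : ℝ} (hδ : 0 < δ) :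
    ∃ c : ℕ → OrderedChain V, c 0 = single [e 0] 1 ∧
      (∀ k, boundary (c (k + 1)) = c k + map Neg.neg (c k)) ∧
      ∀ k ≤ n, c k ∈ supported (ZMod 2) (ZMod 2)
        (smallSimplices (k + 1) {p : V | 1 ≤ (n + 1) * ‖p‖} δ) := by
  set r : ℝ := 1 - ((n + 1 : ℕ) : ℝ)⁻¹ with hr
  have hr0 : 0 ≤ r := by
    rw [hr, sub_nonneg]
    exact inv_le_one_of_one_le₀ (by exact_mod_cast Nat.succ_pos n)
  have hr1 : r < 1 := by
    rw [hr, sub_lt_self_iff]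
    positivity
  obtain ⟨m, hm⟩ := exists_pow_lt_of_lt_one (half_pos hδ) hr1
  refine ⟨fun k => (subdivide (k + 1))^[m] (hemisphere e k), subdivide_iterate_vertex m (e 0),
    fun k => ?_, fun k hk => ?_⟩
  · rw [boundary_subdivide_iterate, boundary_hemisphere, map_neg_subdivide_iterate,
      iterate_map_add]
  · let K : {u : V // ‖u‖ ≤ n + 1} → Set V := fun u => {p | ⟪u.1, p⟫_ℝ = 1}
    have hK : ∀ u, Convex ℝ (K u) := fun u =>
      convex_hyperplane (innerSL ℝ u.1).isBoundedLinearMap.toIsLinearMap 1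
    have hmem : hemisphere e k ∈
        supported (ZMod 2) (ZMod 2) (⋃ u, smallSimplices (k + 1) (K u) 2) := by
      refine supported_mono ?_ (hemisphere_mem_supported he hort hk)
      rintro l ⟨hl, u, hu, -, hp⟩
      have hkn : (k : ℝ) ≤ n := by exact_mod_cast hk
      refine Set.mem_iUnion.2 ⟨⟨u, by linarith⟩, hl, fun p hpl => (hp p hpl).2.1,
        fun p hpl q hql => ?_⟩
      refine (dist_le_norm_add_norm p q).trans ?_
      rw [(hp p hpl).1, (hp q hql).1]
      norm_num
    refine supported_mono ?_ (subdivide_iterate_mem (N := n + 1) (by omega) hK hmem m)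
    refine Set.iUnion_subset fun u l hl => ⟨hl.1, fun p hp => ?_, fun p hp q hq => ?_⟩
    · have h1 : ⟪u.1, p⟫_ℝ = 1 := hl.2.1 p hp
      calc (1 : ℝ) = ⟪u.1, p⟫_ℝ := h1.symm
        _ ≤ ‖u.1‖ * ‖p‖ := real_inner_le_norm _ _
        _ ≤ (n + 1) * ‖p‖ := by gcongr; exact u.2
    · refine (hl.2.2 p hp q hq).trans ?_
      rw [← hr]
      linarith

end CrossPolytope

end OrderedChain

end Chains

/-! ### Antisymmetric labellings -/

/-- A set disjoint from its antipode is cut out by a function changing value at antipodes. -/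
lemma exists_antisymmetric_label {V : Type*} [AddCommGroup V] [Module ℝ V] {P : Set V}
    (hP : ∀ x ∈ P, -x ∉ P) :
    ∃ s : V → ZMod 2, (∀ x ≠ 0, s (-x) = s x + 1) ∧ (∀ x ∈ P, s x = 1) ∧
      ∀ x, -x ∈ P → s x = 0 := by
  classical
  have h11 : (1 : ZMod 2) + 1 = 0 := by decide
  refine ⟨fun x => if x ∈ P then 1 else if -x ∈ P then 0 else
    if WellOrderingRel x (-x) then 1 else 0, fun x hx => ?_, fun x hx => by simp [hx],
    fun x hx => ?_⟩
  · by_cases h1 : x ∈ P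
    · simp [h1, hP x h1, h11]
    · by_cases h2 : -x ∈ P
      · simp [h1, h2]
      · simp only [h1, h2, neg_neg, if_false]
        have hne : x ≠ -x := fun h => by
          have h2 : (2 : ℝ) • x = 0 := by rw [two_smul, ← eq_neg_iff_add_eq_zero]; exact h
          exact hx ((smul_eq_zero.1 h2).resolve_left two_ne_zero)
        rcases trichotomous_of WellOrderingRel x (-x) with h | h | h
        · simp [h, asymm_of WellOrderingRel h, h11]
        · exact absurd h hne
        · simp [h, asymm_of WellOrderingRel h]
  · have : x ∉ P := fun h => hP x h hx
    simp [this, hx]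

lemma dist_normalize_le {V : Type*} [NormedAddCommGroup V] [NormedSpace ℝ V] {x y : V}
    (hx : x ≠ 0) (hy : y ≠ 0) :
    dist (‖x‖⁻¹ • x) (‖y‖⁻¹ • y) ≤ 2 * ‖x‖⁻¹ * dist x y := by
  have hx' : 0 < ‖x‖ := norm_pos_iff.2 hx
  have hy' : 0 < ‖y‖ := norm_pos_iff.2 hy
  have heq : ‖x‖⁻¹ • x - ‖y‖⁻¹ • y = ‖x‖⁻¹ • (x - y) + (‖x‖⁻¹ * (‖y‖ - ‖x‖)) • (‖y‖⁻¹ • y) := by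
    have : ‖x‖⁻¹ * (‖y‖ - ‖x‖) * ‖y‖⁻¹ = ‖x‖⁻¹ - ‖y‖⁻¹ := by field_simp
    rw [smul_sub, smul_smul, this, sub_smul]
    abel
  rw [dist_eq_norm, heq]
  refine (norm_add_le _ _).trans ?_
  have h1 : |‖y‖ - ‖x‖| ≤ ‖x - y‖ := by rw [norm_sub_rev]; exact abs_norm_sub_norm_le y x
  rw [norm_smul, norm_smul, norm_smul, norm_mul, norm_inv, norm_inv, norm_norm, norm_norm,
    inv_mul_cancel₀ hy'.ne', mul_one, Real.norm_eq_abs, dist_eq_norm]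
  have := mul_le_mul_of_nonneg_left h1 (inv_nonneg.2 hx'.le)
  linarith

/-- The Lusternik–Schnirelmann theorem for the unit sphere of an inner product space containing
`n + 1` orthonormal vectors. -/
lemma exists_not_disjoint_neg {V : Type*} [NormedAddCommGroup V] [InnerProductSpace ℝ V] {n : ℕ}
    {e : ℕ → V} (he : ∀ i ≤ n, ‖e i‖ = 1) (hort : ∀ i j, i ≠ j → inner ℝ (e i) (e j) = 0)
    {A : Fin (n + 1) → Set V} (hA : ∀ i, IsCompact (A i))
    (hAcover : ∀ x : V, ‖x‖ = 1 → ∃ i, x ∈ A i) : ∃ i, ¬Disjoint (A i) (-A i) := by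
  by_contra! hAneg
  choose δ hδ hdisj using fun i => (hAneg i).exists_thickenings (hA i) (hA i).neg.isClosed
  obtain ⟨i₀, hi₀⟩ := Finite.exists_min δ
  let P : Fin (n + 1) → Set V := fun i => {x | ‖x‖⁻¹ • x ∈ Metric.thickening (δ i₀) (A i)}
  have hP : ∀ i, ∀ x ∈ P i, -x ∉ P i := by
    intro i x hx hx'
    refine Set.disjoint_left.1 (hdisj i) (Metric.thickening_mono (hi₀ i) _ hx)
      (Metric.thickening_mono (hi₀ i) _ ?_)
    obtain ⟨a, ha, hlt⟩ := Metric.mem_thickening_iff.1 hx'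
    refine Metric.mem_thickening_iff.2 ⟨-a, by simpa using ha, ?_⟩
    rwa [← dist_neg_neg, neg_neg, ← smul_neg, ← norm_neg x]
  choose s hanti hone hzero using fun i => exists_antisymmetric_label (hP i)
  obtain ⟨c, hc0, hc, hsupp⟩ := OrderedChain.exists_fine_hemispheres he hort
    (δ := δ i₀ / (4 * (n + 1))) (by have := hδ i₀; positivity)
  have hnz : ∀ p : V, 1 ≤ (n + 1) * ‖p‖ → p ≠ 0 := by
    rintro p hp rfl
    norm_num at hp
  let S : List (V → ZMod 2) := List.ofFn fun i : Fin n => s i.castSucc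
  have hS : S.length = n := List.length_ofFn
  have hcount : OrderedChain.evalCup S (c S.length) = 1 := by
    refine OrderedChain.evalCup_eq_one Neg.neg (n := n) (X := {x | x ≠ 0}) hc0 (fun k _ => hc k)
      (fun k hk => ?_) ?_ hS.le
    · refine Finsupp.supported_mono ?_ (hsupp k hk)
      exact fun l hl p hp => hnz p (hl.2.1 p hp)
    · intro t ht x hx
      obtain ⟨i, rfl⟩ := List.mem_ofFn.1 ht
      exact hanti _ x hx
  have hvanish : OrderedChain.evalCup S (c S.length) ∈ (⊥ : Submodule (ZMod 2) (ZMod 2)) := by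
    rw [hS]
    refine OrderedChain.map_mem_of_mem_supported (fun l hl => ?_) (hsupp n le_rfl)
    rw [Submodule.mem_bot, OrderedChain.evalCup_single]
    obtain ⟨hlen, hfar, hsmall⟩ := hl
    obtain ⟨p, hp⟩ := List.exists_mem_of_length_pos (l := l) (by omega)
    have hclose : ∀ q ∈ l, dist (‖q‖⁻¹ • q) (‖p‖⁻¹ • p) < δ i₀ := by
      intro q hq
      have hq0 := norm_pos_iff.2 (hnz q (hfar q hq))
      have hinv : ‖q‖⁻¹ ≤ n + 1 := by
        rw [inv_le_iff_one_le_mul₀ hq0]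
        exact hfar q hq
      have := hδ i₀
      calc _ ≤ 2 * ‖q‖⁻¹ * dist q p := dist_normalize_le (hnz q (hfar q hq)) (hnz p (hfar p hp))
        _ ≤ 2 * (n + 1) * (δ i₀ / (4 * (n + 1))) := by
          gcongr
          exact hsmall q hq p hp
        _ = δ i₀ / 2 := by field_simp; norm_num
        _ < δ i₀ := half_lt_self this
    have hunit : ‖‖p‖⁻¹ • p‖ = 1 := norm_smul_inv_norm (𝕜 := ℝ) (hnz p (hfar p hp))
    have hmem : ∃ i : Fin n, ‖p‖⁻¹ • p ∈ A i.castSucc ∨ -(‖p‖⁻¹ • p) ∈ A i.castSucc := by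
      obtain ⟨i, hi⟩ := hAcover _ hunit
      obtain ⟨j, hj⟩ := hAcover (-(‖p‖⁻¹ • p)) (by rwa [norm_neg])
      rcases Fin.eq_castSucc_or_eq_last i with ⟨i, rfl⟩ | rfl
      · exact ⟨i, Or.inl hi⟩
      rcases Fin.eq_castSucc_or_eq_last j with ⟨j, rfl⟩ | rfl
      · exact ⟨j, Or.inr hj⟩
      · exact absurd hj (Set.disjoint_left.1 (hAneg _) hi)
    obtain ⟨i, hi⟩ := hmem
    refine OrderedChain.cupCoboundary_eq_zero (List.mem_ofFn.2 ⟨i, rfl⟩) ?_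
    rcases hi with hi | hi
    · have : ∀ q ∈ l, s i.castSucc q = 1 := fun q hq =>
        hone _ q (Metric.mem_thickening_iff.2 ⟨_, hi, hclose q hq⟩)
      intro x hx y hy
      rw [this x hx, this y hy]
    · have : ∀ q ∈ l, s i.castSucc q = 0 := fun q hq =>
        hzero _ q (Metric.mem_thickening_iff.2 ⟨_, hi, by
          rw [norm_neg, smul_neg, dist_neg_neg]; exact hclose q hq⟩)
      intro x hx y hy
      rw [this x hx, this y hy]
  rw [hcount] at hvanish
  exact one_ne_zero ((Submodule.mem_bot _).1 hvanish)

/-- The standard basis of Euclidean space, extended by zero to a sequence. -/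
lemma exists_orthonormal_sequence (n : ℕ) :
    ∃ e : ℕ → EuclideanSpace ℝ (Fin (n + 1)),
      (∀ i ≤ n, ‖e i‖ = 1) ∧ ∀ i j, i ≠ j → inner ℝ (e i) (e j) = 0 := by
  refine ⟨fun k => if h : k < n + 1 then EuclideanSpace.single ⟨k, h⟩ 1 else 0,
    fun i hi => ?_, fun i j hij => ?_⟩
  · simp only [dif_pos (Nat.lt_succ_of_le hi)]
    simp
  · by_cases hi : i < n + 1
    · by_cases hj : j < n + 1
      · simp only [dif_pos hi, dif_pos hj]
        simp [EuclideanSpace.inner_single_left, hij]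
      · simp only [dif_neg hj, inner_zero_right]
    · simp only [dif_neg hi, inner_zero_left]

/-- Lusternik–Schnirelmann: if `S^n` is covered by `n+1` closed sets, one of
them contains a pair of antipodal points. -/
theorem lusternik_schnirelmann (n : ℕ) (hn : 1 ≤ n)
    (F : Fin (n + 1) → Set (Metric.sphere (0 : EuclideanSpace ℝ (Fin (n + 1))) 1))
    (hclosed : ∀ i, IsClosed (F i))
    (hcover : (⋃ i, F i) = Set.univ) :
    ∃ i, ∃ x : Metric.sphere (0 : EuclideanSpace ℝ (Fin (n + 1))) 1,
      x ∈ F i ∧ -x ∈ F i := by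
  by_contra! hF
  set V := EuclideanSpace ℝ (Fin (n + 1))
  let A : Fin (n + 1) → Set V := fun i => Subtype.val '' F i
  have hA : ∀ i, IsCompact (A i) := fun i => (hclosed i).isCompact.image continuous_subtype_val
  have hAneg : ∀ i, Disjoint (A i) (-A i) := by
    intro i
    rw [Set.disjoint_left]
    rintro _ ⟨x, hx, rfl⟩ ⟨y, hy, hxy⟩
    have : y = -x := Subtype.ext hxy
    exact hF i x hx (this ▸ hy)
  have hAcover : ∀ x : V, ‖x‖ = 1 → ∃ i, x ∈ A i := by
    intro x hx
    have : (⟨x, by simpa using hx⟩ : Metric.sphere (0 : V) 1) ∈ ⋃ i, F i := hcover ▸ Set.mem_univ _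
    obtain ⟨i, hi⟩ := Set.mem_iUnion.1 this
    exact ⟨i, _, hi, rfl⟩
  obtain ⟨e, he, hort⟩ := exists_orthonormal_sequence n
  obtain ⟨i, hi⟩ := exists_not_disjoint_neg he hort hA hAcover
  exact hi (hAneg i)
end

section
/- If f : S^n → ℝ^n is continuous, then the 'antipodal difference' map F(x) = f(x) − f(−x) has a zero; equivalently, every continuous odd map from S^n to ℝ^n has a zero. -/
/-! ### Mod 2 cochains on ordered tuples

A cochain is a function `List V → ZMod 2`; its degree `k` part is its restriction to lists of
length `k + 1`. The empty list plays the role of the augmentation. -/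

section Cochain

variable {V : Type*}

/-- The simplicial coboundary: the sum of `φ` over all lists obtained by deleting one entry. -/
def coboundary : (List V → ZMod 2) → List V → ZMod 2
  | _, [] => 0
  | φ, a :: l => φ l + coboundary (fun m => φ (a :: m)) l

theorem coboundary_add (φ ψ : List V → ZMod 2) (l : List V) :
    coboundary (fun m => φ m + ψ m) l = coboundary φ l + coboundary ψ l := by
  induction l generalizing φ ψ with
  | nil => simp [coboundary]
  | cons a l ih => simp only [coboundary, ih]; ring

theorem coboundary_const_mul (c : ZMod 2) (φ : List V → ZMod 2) (l : List V) :
    coboundary (fun m => c * φ m) l = c * coboundary φ l := by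
  induction l generalizing φ with
  | nil => simp [coboundary]
  | cons a l ih => simp only [coboundary, ih]; ring

theorem coboundary_congr {φ ψ : List V → ZMod 2} {l : List V}
    (h : ∀ m, m.Sublist l → m.length + 1 = l.length → φ m = ψ m) :
    coboundary φ l = coboundary ψ l := by
  induction l generalizing φ ψ with
  | nil => rfl
  | cons a l ih =>
    simp only [coboundary]
    rw [h l (List.sublist_cons_self a l) rfl,
      ih fun m hm hl => h (a :: m) (hm.cons_cons a) (by simpa using hl)]

theorem coboundary_zero (l : List V) : coboundary (fun _ => 0) l = 0 := by
  induction l with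
  | nil => rfl
  | cons a l ih => simp [coboundary, ih]

theorem coboundary_coboundary (φ : List V → ZMod 2) (l : List V) :
    coboundary (coboundary φ) l = 0 := by
  induction l generalizing φ with
  | nil => rfl
  | cons a l ih =>
    simp only [coboundary, coboundary_add, ih, add_zero]
    exact CharTwo.add_self_eq_zero _

theorem coboundary_map {W : Type*} (g : V → W) (φ : List W → ZMod 2) (l : List V) :
    coboundary φ (l.map g) = coboundary (fun m => φ (m.map g)) l := by
  induction l generalizing φ with
  | nil => rfl
  | cons a l ih => simp [coboundary, ih]

end Cochain

/-! ### Sign changes along a tuple -/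

section SignChange

variable {V : Type*} (s : ℕ → V → ZMod 2)

/-- The cup product of the coboundaries of `s 0, …, s (k - 1)`, evaluated on a list of
length `k + 1`. -/
def signChange : List V → ZMod 2
  | [] => 0
  | [_] => 1
  | x :: y :: l => (s l.length x + s l.length y) * signChange (y :: l)

/-- A cochain whose coboundary is `signChange s`. -/
def signPrimitive : List V → ZMod 2
  | [] => 1
  | x :: l => s l.length x * signChange s (x :: l)

theorem coboundary_signPrimitive_cons_cons {x y : V} {l : List V}
    (h : coboundary (signChange s) (x :: y :: l) = 0) :
    coboundary (signPrimitive s) (x :: y :: l) = signChange s (x :: y :: l) := by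
  have hconst : coboundary (fun m => signPrimitive s (x :: m)) (y :: l)
      = s l.length x * coboundary (fun m => signChange s (x :: m)) (y :: l) := by
    rw [← coboundary_const_mul]
    refine coboundary_congr fun m _ hm => ?_
    have : m.length = l.length := by simpa using hm
    simp [signPrimitive, this]
  have hx : coboundary (fun m => signChange s (x :: m)) (y :: l) = signChange s (y :: l) := by
    rw [coboundary] at h
    exact (CharTwo.add_eq_zero.mp h).symm
  rw [coboundary, hconst, hx]
  simp only [signPrimitive, signChange]
  ring

theorem coboundary_signPrimitive : coboundary (signPrimitive s) = signChange s := by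
  funext l
  induction hk : l.length generalizing l with
  | zero => rw [List.length_eq_zero_iff.mp hk]; rfl
  | succ k ih =>
    match l with
    | [x] => simp [coboundary, signPrimitive, signChange]
    | x :: y :: l =>
      apply coboundary_signPrimitive_cons_cons
      rw [← coboundary_coboundary (signPrimitive s) (x :: y :: l)]
      exact coboundary_congr fun m _ hm => (ih m (by omega)).symm

variable {s}

theorem signChange_map_neg [Neg V] {l : List V}
    (h : ∀ i, ∀ x ∈ l, s i (-x) = s i x + 1) :
    signChange s (l.map (-·)) = signChange s l := by
  induction l with
  | nil => rfl
  | cons x l ih =>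
    cases l with
    | nil => rfl
    | cons y l =>
      have hl := ih fun i z hz => h i z (List.mem_cons_of_mem _ hz)
      simp only [List.map_cons] at hl ⊢
      rw [signChange, signChange, hl, List.length_map, h _ x (by simp), h _ y (by simp)]
      congr 1
      linear_combination CharTwo.add_self_eq_zero (1 : ZMod 2)

theorem signPrimitive_add_map_neg [Neg V] {l : List V}
    (h : ∀ i, ∀ x ∈ l, s i (-x) = s i x + 1) :
    signPrimitive s l + signPrimitive s (l.map (-·)) = signChange s l := by
  cases l with
  | nil => exact CharTwo.add_self_eq_zero 1
  | cons x l =>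
    have hl := signChange_map_neg h
    simp only [List.map_cons] at hl ⊢
    rw [signPrimitive, signPrimitive, hl, List.length_map, h _ x (by simp)]
    linear_combination signChange s (x :: l) * CharTwo.add_self_eq_zero (s l.length x)

/-- If `signChange s` does not vanish on a list, each `s i` takes two values on it. -/
theorem exists_ne_of_signChange_ne_zero {l : List V} (hl : signChange s l ≠ 0) {i : ℕ}
    (hi : i + 1 < l.length) : ∃ x ∈ l, ∃ y ∈ l, s i x ≠ s i y := by
  induction l with
  | nil => simp at hi
  | cons x l ih =>
    cases l with
    | nil => simp at hi
    | cons y l =>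
      rw [signChange] at hl
      rcases (show i = l.length ∨ i < l.length by simp at hi; omega) with rfl | hil
      · refine ⟨x, by simp, y, by simp, fun h => left_ne_zero_of_mul hl ?_⟩
        rw [h]; exact CharTwo.add_self_eq_zero _
      · obtain ⟨u, hu, v, hv, huv⟩ := ih (right_ne_zero_of_mul hl) (by simpa using hil)
        exact ⟨u, List.mem_cons_of_mem _ hu, v, List.mem_cons_of_mem _ hv, huv⟩

end SignChange

/-! ### Barycentric subdivision -/

section Subdivision

variable {V : Type*} [NormedAddCommGroup V] [NormedSpace ℝ V]

/-- The barycenter of the entries of a list. -/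
noncomputable def barycenter (l : List V) : V := (l.length : ℝ)⁻¹ • l.sum

theorem barycenter_map_neg (l : List V) : barycenter (l.map (-·)) = -barycenter l := by
  have : (l.map (-·)).sum = -l.sum := by
    induction l with
    | nil => simp
    | cons a l ih => simp [ih, add_comm]
  simp only [barycenter, this, List.length_map, smul_neg]

theorem barycenter_mem {C : Set V} (hC : Convex ℝ C) {l : List V} (hl : l ≠ [])
    (h : ∀ x ∈ l, x ∈ C) : barycenter l ∈ C := by
  have hpos : (0 : ℝ) < l.length := by exact_mod_cast List.length_pos_iff.mpr hl
  have hb : barycenter l = ∑ i : Fin l.length, (l.length : ℝ)⁻¹ • l.get i := by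
    rw [barycenter, ← Finset.smul_sum]
    congr 1
    simp [← List.sum_ofFn]
  rw [hb]
  refine hC.sum_mem (fun _ _ => by positivity) ?_ fun i _ => h _ (List.get_mem l i)
  simp [hpos.ne']

theorem norm_sum_sub_smul_le {l : List V} {x : V} {d : ℝ} (h : ∀ y ∈ l, dist y x ≤ d) :
    ‖l.sum - (l.length : ℝ) • x‖ ≤ l.length * d := by
  induction l with
  | nil => simp
  | cons y l ih =>
    have h1 : dist y x ≤ d := h y (by simp)
    have h2 := ih fun z hz => h z (List.mem_cons_of_mem _ hz)
    rw [dist_eq_norm] at h1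
    have : (y :: l).sum - ((y :: l).length : ℝ) • x
        = (y - x) + (l.sum - (l.length : ℝ) • x) := by
      simp only [List.sum_cons, List.length_cons]; push_cast; module
    rw [this]
    refine (norm_add_le _ _).trans ?_
    push_cast [List.length_cons]
    linarith

theorem dist_barycenter_le {l : List V} {x : V} (hx : x ∈ l) {d r : ℝ} (hd : 0 ≤ d)
    (h : ∀ y ∈ l, dist y x ≤ d) (hr : (l.length : ℝ) * (1 - r) ≤ 1) :
    dist (barycenter l) x ≤ r * d := by
  classical
  have hp := List.perm_cons_erase hx
  set l' := l.erase x
  have hlen : (l.length : ℝ) = l'.length + 1 := by rw [hp.length_eq]; simp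
  have hsum : l.sum = x + l'.sum := by rw [hp.sum_eq]; simp
  have hl' := norm_sum_sub_smul_le (l := l') (x := x) fun y hy => h y (List.mem_of_mem_erase hy)
  have hpos : (0 : ℝ) < l.length := by rw [hlen]; positivity
  have : barycenter l - x = (l.length : ℝ)⁻¹ • (l'.sum - (l'.length : ℝ) • x) := by
    rw [barycenter, eq_inv_smul_iff₀ hpos.ne', smul_sub, smul_inv_smul₀ hpos.ne', hsum, hlen]
    module
  rw [dist_eq_norm, this, norm_smul, norm_inv, Real.norm_of_nonneg hpos.le,
    inv_mul_le_iff₀ hpos]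
  refine hl'.trans ?_
  have : (l'.length : ℝ) ≤ l.length * r := by linarith
  nlinarith

/-- Auxiliary form of `subdivide`, for lists of a prescribed length. -/
noncomputable def subdivideAux : ℕ → (List V → ZMod 2) → List V → ZMod 2
  | 0, φ, _ => φ []
  | k + 1, φ, l => coboundary (subdivideAux k fun m => φ (barycenter l :: m)) l

/-- Pullback of a cochain along barycentric subdivision. -/
noncomputable def subdivide (φ : List V → ZMod 2) (l : List V) : ZMod 2 :=
  subdivideAux l.length φ l

theorem subdivide_nil (φ : List V → ZMod 2) : subdivide φ [] = φ [] := rfl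

theorem subdivide_of_ne_nil (φ : List V → ZMod 2) {l : List V} (hl : l ≠ []) :
    subdivide φ l = coboundary (subdivide fun m => φ (barycenter l :: m)) l := by
  obtain ⟨k, hk⟩ := Nat.exists_eq_succ_of_ne_zero (mt List.length_eq_zero_iff.mp hl)
  rw [subdivide, hk, subdivideAux]
  refine coboundary_congr fun m _ hm => ?_
  rw [subdivide, show m.length = k by omega]

theorem subdivide_add (φ ψ : List V → ZMod 2) (l : List V) :
    subdivide (fun m => φ m + ψ m) l = subdivide φ l + subdivide ψ l := by
  induction hk : l.length generalizing φ ψ l with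
  | zero => rw [List.length_eq_zero_iff.mp hk]; rfl
  | succ k ih =>
    have hl : l ≠ [] := by rintro rfl; simp at hk
    rw [subdivide_of_ne_nil _ hl, subdivide_of_ne_nil _ hl, subdivide_of_ne_nil _ hl,
      ← coboundary_add]
    exact coboundary_congr fun m _ hm => ih _ _ _ (by omega)

theorem subdivide_coboundary (φ : List V → ZMod 2) (l : List V) :
    subdivide (coboundary φ) l = coboundary (subdivide φ) l := by
  induction hk : l.length generalizing φ l with
  | zero => rw [List.length_eq_zero_iff.mp hk]; rfl
  | succ k ih =>
    have hl : l ≠ [] := by rintro rfl; simp at hk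
    rw [subdivide_of_ne_nil _ hl]
    simp only [coboundary]
    have h : coboundary (subdivide fun m => φ m + coboundary (fun t => φ (barycenter l :: t)) m) l
        = coboundary (fun m => subdivide φ m
            + coboundary (subdivide fun t => φ (barycenter l :: t)) m) l := by
      refine coboundary_congr fun m _ hm => ?_
      rw [subdivide_add, ih _ _ (by omega)]
    rw [h, coboundary_add, coboundary_coboundary, add_zero]

theorem subdivide_map_neg (φ : List V → ZMod 2) (l : List V) :
    subdivide φ (l.map (-·)) = subdivide (fun m => φ (m.map (-·))) l := by
  induction hk : l.length generalizing φ l with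
  | zero => rw [List.length_eq_zero_iff.mp hk]; rfl
  | succ k ih =>
    have hl : l ≠ [] := by rintro rfl; simp at hk
    rw [subdivide_of_ne_nil _ hl, subdivide_of_ne_nil _ (by simpa using hl), coboundary_map]
    refine coboundary_congr fun m _ hm => ?_
    rw [ih _ _ (by omega), barycenter_map_neg]
    rfl

theorem subdivide_singleton (φ : List V → ZMod 2) (x : V) : subdivide φ [x] = φ [x] := by
  rw [subdivide_of_ne_nil _ (by simp)]
  simp [coboundary, subdivide_nil, barycenter]

theorem subdivide_eq_zero {φ : List V → ZMod 2} {C : Set V} (hC : Convex ℝ C) {l : List V}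
    {d r : ℝ} (hd : 0 ≤ d) (hr₁ : r ≤ 1) (hr : (l.length : ℝ) * (1 - r) ≤ 1)
    (hl : ∀ x ∈ l, x ∈ C) (hld : ∀ x ∈ l, ∀ y ∈ l, dist x y ≤ d)
    (h : ∀ m : List V, m.length = l.length → (∀ x ∈ m, x ∈ C) →
      (∀ x ∈ m, ∀ y ∈ m, dist x y ≤ r * d) → φ m = 0) :
    subdivide φ l = 0 := by
  induction hk : l.length generalizing φ l C with
  | zero =>
    obtain rfl := List.length_eq_zero_iff.mp hk
    exact h [] rfl (by simp) (by simp)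
  | succ k ih =>
    have hne : l ≠ [] := by rintro rfl; simp at hk
    have hb : ∀ x ∈ l, dist (barycenter l) x ≤ r * d := fun x hx =>
      dist_barycenter_le hx hd (fun y hy => hld y hy x hx) hr
    have hrd : 0 ≤ r * d := by
      obtain ⟨x, hx⟩ := List.exists_mem_of_ne_nil l hne
      exact dist_nonneg.trans (hb x hx)
    rw [subdivide_of_ne_nil _ hne, ← coboundary_zero l]
    refine coboundary_congr fun m hm hml => ?_
    have hmem : ∀ x ∈ m, x ∈ l := fun x hx => hm.subset hx
    refine ih (hC.inter (convex_closedBall (barycenter l) (r * d))) ?_ ?_ ?_ ?_ (by omega)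
    · have : (m.length : ℝ) ≤ l.length := by exact_mod_cast hm.length_le
      nlinarith
    · exact fun x hx => ⟨hl x (hmem x hx), by
        rw [Metric.mem_closedBall, dist_comm]; exact hb x (hmem x hx)⟩
    · exact fun x hx y hy => hld x (hmem x hx) y (hmem y hy)
    · intro t ht htC htd
      refine h _ (by simp; omega) ?_ ?_
      · simpa using ⟨barycenter_mem hC hne hl, fun x hx => (htC x hx).1⟩
      · have htb : ∀ x ∈ t, dist x (barycenter l) ≤ r * d := fun x hx => (htC x hx).2
        simp only [List.mem_cons]
        rintro x (rfl | hx) y (rfl | hy)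
        · simpa using hrd
        · rw [dist_comm]; exact htb y hy
        · exact htb x hx
        · exact htd x hx y hy

theorem iterate_subdivide_add (N : ℕ) (φ ψ : List V → ZMod 2) :
    subdivide^[N] (fun m => φ m + ψ m) = fun l => subdivide^[N] φ l + subdivide^[N] ψ l := by
  induction N generalizing φ ψ with
  | zero => rfl
  | succ N ih =>
    simp only [Function.iterate_succ_apply, ← ih]
    congr 1
    exact funext (subdivide_add φ ψ)

theorem iterate_subdivide_coboundary (N : ℕ) (φ : List V → ZMod 2) :
    subdivide^[N] (coboundary φ) = coboundary (subdivide^[N] φ) :=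
  (Function.Commute.iterate_left (fun φ => funext (subdivide_coboundary φ)) N) φ

theorem iterate_subdivide_map_neg (N : ℕ) (φ : List V → ZMod 2) :
    (fun l => subdivide^[N] φ (l.map (-·))) = subdivide^[N] fun m => φ (m.map (-·)) := by
  induction N generalizing φ with
  | zero => rfl
  | succ N ih =>
    simp only [Function.iterate_succ_apply, ih]
    congr 1
    exact funext (subdivide_map_neg φ)

theorem iterate_subdivide_singleton (N : ℕ) (φ : List V → ZMod 2) (x : V) :
    subdivide^[N] φ [x] = φ [x] := by
  induction N generalizing φ with
  | zero => rfl
  | succ N ih => rw [Function.iterate_succ_apply, ih, subdivide_singleton]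

theorem iterate_subdivide_eq_zero (N : ℕ) {φ : List V → ZMod 2} {C : Set V} (hC : Convex ℝ C)
    {l : List V} {d r : ℝ} (hd : 0 ≤ d) (hr₀ : 0 ≤ r) (hr₁ : r ≤ 1)
    (hr : (l.length : ℝ) * (1 - r) ≤ 1)
    (hl : ∀ x ∈ l, x ∈ C) (hld : ∀ x ∈ l, ∀ y ∈ l, dist x y ≤ d)
    (h : ∀ m : List V, m.length = l.length → (∀ x ∈ m, x ∈ C) →
      (∀ x ∈ m, ∀ y ∈ m, dist x y ≤ r ^ N * d) → φ m = 0) :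
    subdivide^[N] φ l = 0 := by
  induction N generalizing l d with
  | zero => exact h l rfl hl (by simpa using hld)
  | succ N ih =>
    rw [Function.iterate_succ_apply']
    refine subdivide_eq_zero hC hd hr₁ hr hl hld fun m hm hmC hmd => ?_
    refine ih (mul_nonneg hr₀ hd) (by rwa [hm]) hmC hmd fun t ht htC htd => ?_
    exact h t (ht.trans hm) htC (by simpa only [pow_succ, mul_assoc] using htd)

end Subdivision

/-! ### The boundary of the cross-polytope -/

section CrossPolytope

variable {V : Type*}

/-- The sum of `φ` over the lists `[±e (k - 1), …, ±e 0]`, that is, over the facets of the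
cross-polytope with vertices `±e 0, …, ±e (k - 1)`. -/
def facetSum [Neg V] (e : ℕ → V) : ℕ → (List V → ZMod 2) → ZMod 2
  | 0, φ => φ []
  | k + 1, φ => facetSum e k (fun l => φ (e k :: l)) + facetSum e k (fun l => φ (-e k :: l))

theorem facetSum_add [Neg V] (e : ℕ → V) (k : ℕ) (φ ψ : List V → ZMod 2) :
    facetSum e k (fun l => φ l + ψ l) = facetSum e k φ + facetSum e k ψ := by
  induction k generalizing φ ψ with
  | zero => rfl
  | succ k ih => simp only [facetSum, ih]; ring

theorem facetSum_coboundary [Neg V] (e : ℕ → V) (k : ℕ) (φ : List V → ZMod 2) :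
    facetSum e k (coboundary φ) = 0 := by
  induction k generalizing φ with
  | zero => rfl
  | succ k ih =>
    simp only [facetSum, coboundary, facetSum_add, ih, add_zero]
    exact CharTwo.add_self_eq_zero _

theorem facetSum_map_neg [InvolutiveNeg V] (e : ℕ → V) (k : ℕ) (φ : List V → ZMod 2) :
    facetSum e k (fun l => φ (l.map (-·))) = facetSum e k φ := by
  induction k generalizing φ with
  | zero => rfl
  | succ k ih =>
    simp only [facetSum, List.map_cons, neg_neg]
    rw [ih fun l => φ (-e k :: l), ih fun l => φ (e k :: l), add_comm]

theorem facetSum_eq_zero [Neg V] {e : ℕ → V} {k : ℕ} {φ : List V → ZMod 2}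
    (h : ∀ u : ℕ → V, (∀ i, u i = e i ∨ u i = -e i) → ∀ l : List V, l.length = k →
      (∀ x ∈ l, x ∈ u '' Set.Iio k) → φ l = 0) :
    facetSum e k φ = 0 := by
  induction k generalizing φ with
  | zero => exact h e (fun _ => Or.inl rfl) [] rfl (by simp)
  | succ k ih =>
    have key : ∀ a, a = e k ∨ a = -e k → facetSum e k (fun l => φ (a :: l)) = 0 := by
      refine fun a ha => ih fun u hu l hl hlu => ?_
      refine h (Function.update u k a) (fun i => ?_) _ (by simp [hl]) fun x hx => ?_
      · rcases eq_or_ne i k with rfl | hi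
        · simpa using ha
        · simpa [hi] using hu i
      · rcases List.mem_cons.mp hx with rfl | hx
        · exact ⟨k, by simp, by simp⟩
        · obtain ⟨i, hi, rfl⟩ := hlu x hx
          have hi : i < k := hi
          exact ⟨i, Set.mem_Iio.mpr (by omega), by simp [hi.ne]⟩
    rw [facetSum, key _ (Or.inl rfl), key _ (Or.inr rfl), add_zero]

variable [NormedAddCommGroup V] [NormedSpace ℝ V]

/-- The sum of an iterated subdivision of `φ` over the upper hemisphere of the cross-polytope
vanishes if `φ` vanishes on all small tuples lying in a facet. -/
theorem facetSum_cons_iterate_subdivide_eq_zero {e : ℕ → V} (he : ∀ i, ‖e i‖ ≤ 1) (N : ℕ)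
    {n k : ℕ} (hk : k ≤ n) {φ : List V → ZMod 2}
    (h : ∀ u : ℕ → V, (∀ i, u i = e i ∨ u i = -e i) → ∀ l : List V, l.length = k + 1 →
      (∀ x ∈ l, x ∈ convexHull ℝ (u '' Set.Iic n)) →
      (∀ x ∈ l, ∀ y ∈ l, dist x y ≤ ((n : ℝ) / (n + 1)) ^ N * 2) → φ l = 0) :
    facetSum e k (fun l => subdivide^[N] φ (e k :: l)) = 0 := by
  refine facetSum_eq_zero fun u hu l hl hlu => ?_
  have hv : ∀ i, Function.update u k (e k) i = e i ∨ Function.update u k (e k) i = -e i := by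
    intro i
    rcases eq_or_ne i k with rfl | hi
    · simp
    · simpa [hi] using hu i
  have hmem : ∀ x ∈ e k :: l, x ∈ Function.update u k (e k) '' Set.Iic n := by
    intro x hx
    rcases List.mem_cons.mp hx with rfl | hx
    · exact ⟨k, hk, by simp⟩
    · obtain ⟨i, hi, rfl⟩ := hlu x hx
      have hi : i < k := hi
      exact ⟨i, Set.mem_Iic.mpr (by omega), by simp [hi.ne]⟩
  have hnorm : ∀ x ∈ e k :: l, ‖x‖ ≤ 1 := by
    intro x hx
    obtain ⟨i, -, rfl⟩ := hmem x hx
    rcases hv i with h | h <;> simpa [h] using he i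
  have hn : (0 : ℝ) < n + 1 := by positivity
  refine iterate_subdivide_eq_zero N (convex_convexHull ℝ _) zero_le_two
    (r := (n : ℝ) / (n + 1)) (by positivity) ?_ ?_
    (fun x hx => subset_convexHull ℝ _ (hmem x hx)) ?_ fun m hm => h _ hv m (by simpa [hl] using hm)
  · rw [div_le_one hn]; linarith
  · have : (1 : ℝ) - (n : ℝ) / (n + 1) = ((n : ℝ) + 1)⁻¹ := by field_simp; ring
    rw [this, ← div_eq_mul_inv, div_le_one hn]
    simp only [List.length_cons, hl]
    push_cast
    have : (k : ℝ) ≤ n := by exact_mod_cast hk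
    linarith
  · intro x hx y hy
    rw [dist_eq_norm]
    linarith [norm_sub_le x y, hnorm x hx, hnorm y hy]

theorem facetSum_cons_iterate_subdivide_signChange {e : ℕ → V} (he : ∀ i, ‖e i‖ ≤ 1) {n : ℕ}
    {s : ℕ → V → ZMod 2}
    (hs : ∀ u : ℕ → V, (∀ i, u i = e i ∨ u i = -e i) →
      ∀ i, ∀ x ∈ convexHull ℝ (u '' Set.Iic n), s i (-x) = s i x + 1)
    (N : ℕ) {k : ℕ} (hk : k ≤ n) :
    facetSum e k (fun l => subdivide^[N] (signChange s) (e k :: l)) = 1 := by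
  have hboundary : ∀ j, facetSum e j (fun l => subdivide^[N] (signChange s) (e j :: l))
      = facetSum e j (subdivide^[N] (signPrimitive s)) := by
    intro j
    rw [← coboundary_signPrimitive, iterate_subdivide_coboundary]
    simp only [coboundary, facetSum_add, facetSum_coboundary, add_zero]
  induction k with
  | zero => exact iterate_subdivide_singleton N _ _
  | succ k ih =>
    have hkn : k ≤ n := by omega
    have hneg : facetSum e k (fun l => subdivide^[N] (signPrimitive s) (-e k :: l))
        = facetSum e k (fun l =>
            subdivide^[N] (fun m => signPrimitive s (m.map (-·))) (e k :: l)) := by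
      rw [← facetSum_map_neg, ← iterate_subdivide_map_neg]
      rfl
    have hzero := facetSum_cons_iterate_subdivide_eq_zero he N hkn
      (φ := fun m => (signPrimitive s m + signPrimitive s (m.map (-·))) + signChange s m)
      fun u hu l _ hl _ => by
        rw [signPrimitive_add_map_neg fun i x hx => hs u hu i x (hl x hx)]
        exact CharTwo.add_self_eq_zero _
    simp only [iterate_subdivide_add, facetSum_add] at hzero
    rw [hboundary, facetSum, hneg, CharTwo.add_eq_zero.mp hzero, ih hkn]

/-- A discrete Borsuk–Ulam theorem: given antipodal functions `s i`, there is an arbitrarily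
small tuple in a facet of the cross-polytope along which `s 0, …, s (n - 1)` all change. -/
theorem exists_signChange_ne_zero {e : ℕ → V} (he : ∀ i, ‖e i‖ ≤ 1) {n : ℕ}
    {s : ℕ → V → ZMod 2}
    (hs : ∀ u : ℕ → V, (∀ i, u i = e i ∨ u i = -e i) →
      ∀ i, ∀ x ∈ convexHull ℝ (u '' Set.Iic n), s i (-x) = s i x + 1) (N : ℕ) :
    ∃ u : ℕ → V, (∀ i, u i = e i ∨ u i = -e i) ∧ ∃ l : List V, l.length = n + 1 ∧
      (∀ x ∈ l, x ∈ convexHull ℝ (u '' Set.Iic n)) ∧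
      (∀ x ∈ l, ∀ y ∈ l, dist x y ≤ ((n : ℝ) / (n + 1)) ^ N * 2) ∧ signChange s l ≠ 0 := by
  by_contra! hcon
  have h := facetSum_cons_iterate_subdivide_signChange he hs N le_rfl
  rw [facetSum_cons_iterate_subdivide_eq_zero he N le_rfl hcon] at h
  exact zero_ne_one h

end CrossPolytope

/-! ### The Borsuk–Ulam theorem -/

section BorsukUlam

/-- The sign of `c`, as an element of `ZMod 2`, with ties broken by the lexicographic sign
of `x`. -/
noncomputable def tieBrokenSign {m : ℕ} (c : ℝ) (x : EuclideanSpace ℝ (Fin m)) : ZMod 2 :=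
  open Classical in if 0 < c ∨ c = 0 ∧ 0 < toLex x.ofLp then 1 else 0

theorem tieBrokenSign_neg {m : ℕ} (c : ℝ) {x : EuclideanSpace ℝ (Fin m)} (hx : x ≠ 0) :
    tieBrokenSign (-c) (-x) = tieBrokenSign c x + 1 := by
  have hx' : toLex x.ofLp ≠ 0 := by simpa using hx
  have h2 : (1 + 1 : ZMod 2) = 0 := rfl
  have hneg : toLex (-x).ofLp = -toLex x.ofLp := rfl
  unfold tieBrokenSign
  rw [hneg]
  rcases lt_trichotomy c 0 with hc | rfl | hc
  · simp [hc, hc.not_gt, hc.ne]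
  · rcases hx'.lt_or_gt with h | h
    · rw [if_pos (Or.inr ⟨neg_zero, neg_pos.mpr h⟩), if_neg, zero_add]
      exact fun h' => h'.elim (lt_irrefl _) fun h' => h.not_gt h'.2
    · rw [if_neg, if_pos (Or.inr ⟨rfl, h⟩), h2]
      exact fun h' => h'.elim (by simp) fun h' => h.not_gt (neg_pos.mp h'.2)
  · simp [hc, hc.not_gt, hc.ne', h2]

theorem nonneg_of_tieBrokenSign_eq_one {m : ℕ} {c : ℝ} {x : EuclideanSpace ℝ (Fin m)}
    (h : tieBrokenSign c x = 1) : 0 ≤ c := by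
  by_contra! hc
  simp [tieBrokenSign, hc.not_gt, hc.ne] at h

theorem nonpos_of_tieBrokenSign_ne_one {m : ℕ} {c : ℝ} {x : EuclideanSpace ℝ (Fin m)}
    (h : tieBrokenSign c x ≠ 1) : c ≤ 0 := by
  by_contra! hc
  simp [tieBrokenSign, hc] at h

theorem abs_lt_of_tieBrokenSign_ne {m : ℕ} {g : EuclideanSpace ℝ (Fin m) → ℝ}
    {x y z : EuclideanSpace ℝ (Fin m)} {ε : ℝ}
    (hne : tieBrokenSign (g x) x ≠ tieBrokenSign (g y) y)
    (hx : |g x - g z| < ε) (hy : |g y - g z| < ε) : |g z| < ε := by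
  rw [abs_lt] at *
  by_cases h : tieBrokenSign (g x) x = 1
  · have := nonneg_of_tieBrokenSign_eq_one h
    have := nonpos_of_tieBrokenSign_ne_one (h ▸ hne.symm)
    constructor <;> linarith
  · have hy' : tieBrokenSign (g y) y = 1 := by
      revert h hne
      generalize tieBrokenSign (g x) x = a
      generalize tieBrokenSign (g y) y = b
      revert a b
      decide
    have := nonneg_of_tieBrokenSign_eq_one hy'
    have := nonpos_of_tieBrokenSign_ne_one h
    constructor <;> linarith

/-- The standard basis vectors, indexed by `ℕ` and extended by zero. -/
noncomputable def stdVector (m i : ℕ) : EuclideanSpace ℝ (Fin m) :=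
  if h : i < m then EuclideanSpace.single ⟨i, h⟩ 1 else 0

theorem norm_stdVector_le (m i : ℕ) : ‖stdVector m i‖ ≤ 1 := by
  unfold stdVector
  split_ifs <;> simp

theorem sum_abs_eq_one_of_mem_convexHull {n : ℕ} {u : ℕ → EuclideanSpace ℝ (Fin (n + 1))}
    (hu : ∀ i, u i = stdVector (n + 1) i ∨ u i = -stdVector (n + 1) i)
    {x : EuclideanSpace ℝ (Fin (n + 1))} (hx : x ∈ convexHull ℝ (u '' Set.Iic n)) :
    ∑ j, |x j| = 1 := by
  have hσ : ∃ σ : Fin (n + 1) → ℝ, (∀ j, σ j = 1 ∨ σ j = -1) ∧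
      ∀ j : Fin (n + 1), u j = σ j • EuclideanSpace.single j 1 := by
    refine ⟨fun j => u j j, fun j => ?_, fun j => ?_⟩ <;>
      rcases hu j with h | h <;> simp [h, stdVector, Nat.le_of_lt_succ j.isLt]
  obtain ⟨σ, hσ, huσ⟩ := hσ
  have hσσ : ∀ j, σ j * σ j = 1 := fun j => by rcases hσ j with h | h <;> simp [h]
  have hsub : convexHull ℝ (u '' Set.Iic n) ⊆
      {y : EuclideanSpace ℝ (Fin (n + 1)) | (∀ j, 0 ≤ σ j * y j) ∧ ∑ j, σ j * y j = 1} := by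
    refine convexHull_min ?_ ?_
    · rintro _ ⟨i, hi, rfl⟩
      have hi : i ≤ n := hi
      have := huσ ⟨i, by omega⟩
      simp only at this
      rw [this]
      constructor
      · intro j
        by_cases h : j = ⟨i, by omega⟩
        · subst h; simp [hσσ]
        · simp [h]
      · simp [hσσ]
    · rintro y ⟨hy, hy'⟩ z ⟨hz, hz'⟩ a b ha hb hab
      constructor
      · intro j
        have := add_nonneg (mul_nonneg ha (hy j)) (mul_nonneg hb (hz j))
        simp only [PiLp.add_apply, PiLp.smul_apply, smul_eq_mul]
        linarith
      · calc ∑ j, σ j * (a • y + b • z) j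
            = a * ∑ j, σ j * y j + b * ∑ j, σ j * z j := by
              rw [Finset.mul_sum, Finset.mul_sum, ← Finset.sum_add_distrib]
              refine Finset.sum_congr rfl fun j _ => ?_
              simp only [PiLp.add_apply, PiLp.smul_apply, smul_eq_mul]
              ring
          _ = 1 := by rw [hy', hz', mul_one, mul_one, hab]
  obtain ⟨hpos, hsum⟩ := hsub hx
  rw [← hsum]
  refine Finset.sum_congr rfl fun j _ => ?_
  rcases hσ j with h | h
  · have := hpos j
    rw [h, one_mul] at this
    rw [h, one_mul, abs_of_nonneg this]
  · have := hpos j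
    rw [h] at this
    rw [h, abs_of_nonpos (by linarith)]
    ring

theorem isCompact_setOf_sum_abs_eq_one (m : ℕ) :
    IsCompact {x : EuclideanSpace ℝ (Fin m) | ∑ j, |x j| = 1} := by
  refine Metric.isCompact_of_isClosed_isBounded
    (isClosed_eq (by fun_prop) continuous_const) ?_
  refine (Metric.isBounded_closedBall (x := 0) (r := 1)).subset fun x hx => ?_
  have hx : ∑ j, |x j| = 1 := hx
  rw [mem_closedBall_zero_iff, EuclideanSpace.norm_eq, Real.sqrt_le_iff, ← hx]
  refine ⟨Finset.sum_nonneg fun j _ => abs_nonneg _, ?_⟩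
  simpa using Finset.sum_sq_le_sq_sum_of_nonneg (s := Finset.univ) (f := fun j => |x j|)
    fun j _ => abs_nonneg _

/-- The Borsuk–Ulam theorem for odd maps on a punctured Euclidean space. -/
theorem exists_eq_zero_of_odd {n : ℕ}
    {G : EuclideanSpace ℝ (Fin (n + 1)) → EuclideanSpace ℝ (Fin n)}
    (hG : ContinuousOn G {0}ᶜ) (hodd : ∀ x ≠ 0, G (-x) = -G x) : ∃ x ≠ 0, G x = 0 := by
  by_contra! hcon
  set X := {x : EuclideanSpace ℝ (Fin (n + 1)) | ∑ j, |x j| = 1}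
  have hX : IsCompact X := isCompact_setOf_sum_abs_eq_one _
  have hX0 : ∀ x ∈ X, x ≠ 0 := by
    rintro _ hx rfl
    simp [X] at hx
  have hGX : ContinuousOn G X := hG.mono hX0
  have hne : X.Nonempty := ⟨EuclideanSpace.single 0 1, by simp [X, apply_ite]⟩
  obtain ⟨x₀, hx₀, hmin⟩ := hX.exists_isMinOn hne (f := fun x => ∑ i, |G x i|) (by fun_prop)
  set μ := ∑ i, |G x₀ i|
  have hμ : 0 < μ := by
    refine (Finset.sum_nonneg fun i _ => abs_nonneg _).lt_of_ne fun h => hcon x₀ (hX0 _ hx₀) ?_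
    ext i
    have := (Finset.sum_eq_zero_iff_of_nonneg fun i _ => abs_nonneg (G x₀ i)).mp h.symm i
    simpa using this
  have hε : 0 < μ / (n + 1) := by positivity
  obtain ⟨δ, hδ, hGδ⟩ :=
    Metric.uniformContinuousOn_iff.mp (hX.uniformContinuousOn_of_continuous hGX) _ hε
  obtain ⟨N, hN⟩ := exists_pow_lt_of_lt_one (half_pos hδ)
    (show (n : ℝ) / (n + 1) < 1 by rw [div_lt_one (by positivity)]; linarith)
  set g : ℕ → EuclideanSpace ℝ (Fin (n + 1)) → ℝ :=
    fun i x => if h : i < n then G x ⟨i, h⟩ else 0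
  have hg : ∀ i, ∀ x ≠ 0, g i (-x) = -g i x := by
    intro i x hx
    by_cases h : i < n <;> simp [g, h, hodd x hx]
  obtain ⟨u, hu, l, hl, hlX, hld, hls⟩ := exists_signChange_ne_zero
    (e := stdVector (n + 1)) (norm_stdVector_le _) (n := n)
    (s := fun i x => tieBrokenSign (g i x) x)
    (fun u hu i x hx => by
      have hx0 := hX0 x (sum_abs_eq_one_of_mem_convexHull hu hx)
      rw [hg i x hx0, tieBrokenSign_neg _ hx0]) N
  obtain ⟨z, hz⟩ := List.exists_mem_of_length_pos (l := l) (by omega)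
  have hmemX : ∀ x ∈ l, x ∈ X := fun x hx => sum_abs_eq_one_of_mem_convexHull hu (hlX x hx)
  have hsmall : ∀ i : Fin n, |G z i| < μ / (n + 1) := by
    intro i
    obtain ⟨x, hx, y, hy, hxy⟩ := exists_ne_of_signChange_ne_zero hls (i := i) (by omega)
    have hgi : ∀ w, g i w = G w i := fun w => by simp [g]
    have hclose : ∀ w ∈ l, |g i w - g i z| < μ / (n + 1) := by
      intro w hw
      have h1 := hGδ w (hmemX w hw) z (hmemX z hz) ((hld w hw z hz).trans_lt (by linarith))
      rw [dist_eq_norm] at h1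
      rw [hgi, hgi]
      exact (PiLp.norm_apply_le (G w - G z) i).trans_lt h1
    rw [← hgi]
    exact abs_lt_of_tieBrokenSign_ne hxy (hclose x hx) (hclose y hy)
  have hle : μ ≤ ∑ i, |G z i| := hmin (hmemX z hz)
  have hsum : ∑ i, |G z i| ≤ n * (μ / (n + 1)) := by
    simpa using Finset.sum_le_card_nsmul Finset.univ (fun i => |G z i|) _ fun i _ => (hsmall i).le
  have : (n + 1) * (μ / (n + 1)) = μ := by field_simp
  linarith

end BorsukUlam

/-- The antipodal-difference map of a continuous map `S^n → ℝ^n` has a zero. -/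
theorem antipodal_difference_has_zero (n : ℕ)
    (f : Metric.sphere (0 : EuclideanSpace ℝ (Fin (n + 1))) 1 → EuclideanSpace ℝ (Fin n))
    (hf : Continuous f) :
    ∃ x : Metric.sphere (0 : EuclideanSpace ℝ (Fin (n + 1))) 1,
      f x - f (-x) = 0 := by
  let p : EuclideanSpace ℝ (Fin (n + 1)) → Metric.sphere (0 : EuclideanSpace ℝ (Fin (n + 1))) 1 :=
    fun x => if h : x = 0 then ⟨EuclideanSpace.single 0 1, by simp⟩
      else ⟨‖x‖⁻¹ • x, by simp [norm_smul, h]⟩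
  have hp : ∀ x ≠ 0, (p x : EuclideanSpace ℝ (Fin (n + 1))) = ‖x‖⁻¹ • x := fun x hx => by
    simp [p, hx]
  have hpneg : ∀ x ≠ 0, p (-x) = -p x := fun x hx => by
    apply Subtype.ext
    simp [hp x hx, hp (-x) (neg_ne_zero.mpr hx)]
  have hpc : ContinuousOn p {0}ᶜ := by
    rw [Topology.IsInducing.subtypeVal.continuousOn_iff]
    refine ContinuousOn.congr (f := fun x => ‖x‖⁻¹ • x) ?_ fun x hx => hp x hx
    exact (continuousOn_id.norm.inv₀ fun x hx => norm_ne_zero_iff.mpr hx).smul continuousOn_id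
  obtain ⟨x, -, hx⟩ := exists_eq_zero_of_odd (G := fun x => f (p x) - f (-p x))
    ((hf.comp_continuousOn hpc).sub ((hf.comp continuous_neg).comp_continuousOn hpc))
    fun x hx => by simp [hpneg x hx]
  exact ⟨p x, hx⟩
end
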